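/- arXiv:0801.3074 — 4 statements merged into one kernel-verified Lean document; each statement's English description precedes it below -/
import Mathlib

section
/- The commuting variety C has dimension dim C = dim g + rk g. Moreover, for y in a dense open subset of g, the fiber of the first projection π₁ : C → g, (x,y') ↦ x, over y is isomorphic to a Cartan subalgebra of g (an affine space of dimension rk g). -/
noncomputable section

namespace CV

variable (k : Type*) [Field k] (V : Type*) [AddCommGroup V] [Module k V] [FiniteDimensional k V]

/-- Coordinates with respect to a chosen basis of `V`. -/
def coordFn (z : V) (i : Module.Free.ChooseBasisIndex k V) : k :=
  (Module.Free.chooseBasis k V).repr z i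

/-- Evaluation of a polynomial (in the chosen coordinates) at a point of `V`. -/
def evalP (F : MvPolynomial (Module.Free.ChooseBasisIndex k V) k) (z : V) : k :=
  MvPolynomial.aeval (coordFn k V z) F

/-- The Zariski topology on `V`: generated by complements of zero sets of polynomial
functions. -/
def zar : TopologicalSpace V :=
  TopologicalSpace.generateFrom
    {U | ∃ F : MvPolynomial (Module.Free.ChooseBasisIndex k V) k, U = {z | evalP k V F z ≠ 0}}

/-- The dimension of a subset of `V`:  the Krull dimension for the topology induced by the
Zariski topology of `V`. -/
def dimSet (S : Set V) : WithBot ℕ∞ :=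
  @topologicalKrullDim S (TopologicalSpace.induced Subtype.val (zar k V))

/-- The differential at `z ∈ V` of a polynomial `F`, as a linear functional on `V`. -/
def diffAt (F : MvPolynomial (Module.Free.ChooseBasisIndex k V) k) (z : V) : V →ₗ[k] k :=
  (Module.Free.chooseBasis k V).constr k fun i => evalP k V (MvPolynomial.pderiv i F) z

/-- The Zariski tangent space at `z` of a subset `S ⊆ V`:  the common kernel of the
differentials at `z` of all polynomial functions vanishing identically on `S`. -/
def tangent (S : Set V) (z : V) : Submodule k V :=
  ⨅ F ∈ {F | ∀ w ∈ S, evalP k V F w = 0}, LinearMap.ker (diffAt k V F z)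

end CV

/-- The commuting variety `C = {(x,y) ∈ g × g | [x,y] = 0}`. -/
def commSet (k : Type*) (g : Type*) [Field k] [LieRing g] [LieAlgebra k g] : Set (g × g) :=
  {p | ⁅p.1, p.2⁆ = 0}

/-- The centralizer `g_x = {y ∈ g | [x,y] = 0}` of an element `x` of a Lie algebra,
as a submodule. -/
def cent (k : Type*) {g : Type*} [Field k] [LieRing g] [LieAlgebra k g] (x : g) :
    Submodule k g := LinearMap.ker (LieAlgebra.ad k g x)

namespace CVP
open TensorProduct
set_option linter.unusedSectionVars false

section lemA
open LieAlgebra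
attribute [local instance] LieRing.ofAssociativeRing

lemma exists_exp {R G : Type*} [CommRing R] [Algebra ℚ R] [LieRing G] [LieAlgebra R G]
    (u : G) (hn : IsNilpotent (LieAlgebra.ad R G u)) :
    ∃ θ : G ≃ₗ⁅R⁆ G, ∀ w, ∃ w', θ w = w + ⁅u, w⁆ + ⁅u, ⁅u, w'⁆⁆ := by
  let _ : Module ℚ G := Module.compHom G (algebraMap ℚ R)
  have hsm : ∀ (q : ℚ) (x : G), q • x = (algebraMap ℚ R q) • x := fun q x => rfl
  let _ : LieAlgebra ℚ G := { lie_smul := fun q x y => by rw [hsm, hsm, lie_smul] }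
  have hn' : IsNilpotent (LieDerivation.ad R G u).toLinearMap := by
    rw [LieDerivation.coe_ad_apply_eq_ad_apply]; exact hn
  have hD : ∀ w, (LieDerivation.ad R G u).toLinearMap w = ⁅u, w⁆ := fun w => by
    rw [LieDerivation.coe_ad_apply_eq_ad_apply]; rfl
  have hn'' := hn'
  obtain ⟨n, hn0⟩ := hn''
  have hn2 : (LieDerivation.ad R G u).toLinearMap ^ (n+2) = 0 := by rw [pow_add, hn0, zero_mul]
  refine ⟨(LieDerivation.ad R G u).exp hn', fun w => ?_⟩
  refine ⟨∑ i ∈ Finset.range n, ((((i+1+1).factorial : ℚ))⁻¹ • (LieDerivation.ad R G u).toLinearMap ^ i) w, ?_⟩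
  have : (LieDerivation.ad R G u).exp hn' w = IsNilpotent.exp (LieDerivation.ad R G u).toLinearMap w := rfl
  rw [this, IsNilpotent.exp_eq_sum hn2, Finset.sum_range_succ', Finset.sum_range_succ']
  simp only [LinearMap.add_apply, LinearMap.sum_apply, lie_sum, LinearMap.smul_apply]
  have e1 : ∀ (i : ℕ) (q : ℚ), q • ((LieDerivation.ad R G u).toLinearMap ^ (i+1+1)) w =
     ⁅u, ⁅u, q • ((LieDerivation.ad R G u).toLinearMap ^ i) w⁆⁆ := by
    intro i q
    rw [lie_smul, lie_smul, pow_succ', pow_succ', Module.End.mul_apply, Module.End.mul_apply, hD, hD]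
  simp only [e1]
  simp
  abel

variable {K 𝔤 : Type*} [Field K] [LieRing 𝔤] [LieAlgebra K 𝔤] [FiniteDimensional K 𝔤]

lemma ad_baseChange (R : Type*) [CommRing R] [Algebra K R] :
    (LinearMap.tensorProduct K R 𝔤 𝔤 ∘ₗ (LieHom.toLinearMap (LieAlgebra.ad K 𝔤)).baseChange R) =
      (LieHom.toLinearMap (LieAlgebra.ad R (R ⊗[K] 𝔤))) := by
  ext x y
  change (LinearMap.tensorProduct K R 𝔤 𝔤 (1 ⊗ₜ[K] (LieAlgebra.ad K 𝔤) x)) (1 ⊗ₜ[K] y) =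
    ⁅(1 : R) ⊗ₜ[K] x, (1 : R) ⊗ₜ[K] y⁆
  rw [LieAlgebra.ExtendScalars.bracket_tmul]
  simp [LinearMap.tensorProduct]

lemma charpoly_coeff_baseChange (R : Type*) [CommRing R] [Algebra K R] {ι : Type*} [Fintype ι]
    [DecidableEq ι] (b : Module.Basis ι K 𝔤) (y : R ⊗[K] 𝔤) (i : ℕ) :
    (LieAlgebra.ad R (R ⊗[K] 𝔤) y).charpoly.coeff i =
      MvPolynomial.aeval ((Algebra.TensorProduct.basis R b).repr y)
        ((LinearMap.polyCharpoly (LieHom.toLinearMap (LieAlgebra.ad K 𝔤)) b).coeff i) := by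
  have h := LinearMap.polyCharpoly_coeff_eval (LieHom.toLinearMap (LieAlgebra.ad R (R ⊗[K] 𝔤)))
    (Algebra.TensorProduct.basis R b) y i
  rw [← ad_baseChange, LinearMap.polyCharpoly_baseChange] at h
  rw [ad_baseChange] at h
  rw [MvPolynomial.aeval_def, MvPolynomial.eval₂_eq_eval_map, ← Polynomial.coeff_map, h]
  rfl

lemma rank_baseChange (L : Type*) [Field L] [Algebra K L] :
    LieAlgebra.rank L (L ⊗[K] 𝔤) = LieAlgebra.rank K 𝔤 := by
  classical
  let b := Module.Free.chooseBasis K 𝔤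
  have h1 := LieAlgebra.rank_eq_natTrailingDegree K 𝔤 b
  have h2 := LieAlgebra.rank_eq_natTrailingDegree L (L ⊗[K] 𝔤) (Algebra.TensorProduct.basis L b)
  rw [h1, h2, ← ad_baseChange, LinearMap.polyCharpoly_baseChange]
  unfold Polynomial.natTrailingDegree Polynomial.trailingDegree
  rw [Polynomial.support_map_of_injective _
    (MvPolynomial.map_injective _ (algebraMap K L).injective)]

lemma engel_sup_range (x : 𝔤) :
    (LieSubalgebra.engel K x).toSubmodule ⊔ LinearMap.range (LieAlgebra.ad K 𝔤 x) = ⊤ := by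
  have h := LinearMap.isCompl_iSup_ker_pow_iInf_range_pow (LieAlgebra.ad K 𝔤 x)
  rw [eq_top_iff, ← h.codisjoint.eq_top]
  refine sup_le_sup ?_ ?_
  · refine iSup_le fun n => ?_
    intro y hy
    exact (LieSubalgebra.mem_engel_iff K x y).2 ⟨n, hy⟩
  · refine (iInf_le _ 1).trans ?_
    simp

lemma tmul_mem_span (R : Type*) [CommRing R] [Algebra K R] (E : LieSubalgebra K 𝔤) {d : Type*}
    [Fintype d] (β : Module.Basis d K E) (r : R) {e : 𝔤} (he : e ∈ E) :
    r ⊗ₜ[K] e ∈ Submodule.span R (Set.range fun j => (1 : R) ⊗ₜ[K] (β j : 𝔤)) := by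
  have h2 : ∑ j, (β.repr ⟨e, he⟩ j) • (β j : 𝔤) = e := by
    have := congrArg E.subtype (β.sum_repr ⟨e, he⟩)
    rw [map_sum] at this
    exact this
  rw [← h2, TensorProduct.tmul_sum]
  refine Submodule.sum_mem _ fun j _ => ?_
  rw [TensorProduct.tmul_smul, TensorProduct.smul_tmul']
  have : (β.repr ⟨e, he⟩ j • r) ⊗ₜ[K] (β j : 𝔤) =
      (β.repr ⟨e, he⟩ j • r) • ((1 : R) ⊗ₜ[K] (β j : 𝔤)) := by
    rw [TensorProduct.smul_tmul', smul_eq_mul, mul_one]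
  rw [this]
  exact Submodule.smul_mem _ _ (Submodule.subset_span ⟨j, rfl⟩)

lemma exists_split (R : Type*) [CommRing R] [Algebra K R] (x : 𝔤) {d : Type*} [Fintype d]
    (β : Module.Basis d K (LieSubalgebra.engel K x)) (w : R ⊗[K] 𝔤) :
    ∃ e ∈ Submodule.span R (Set.range fun j => (1 : R) ⊗ₜ[K] (β j : 𝔤)),
    ∃ c, w = e + ⁅(1 : R) ⊗ₜ[K] x, c⁆ := by
  induction w with
  | zero => exact ⟨0, zero_mem _, 0, by simp⟩
  | add a b ha hb =>
    obtain ⟨e, he, c, rfl⟩ := ha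
    obtain ⟨e', he', c', rfl⟩ := hb
    exact ⟨e + e', add_mem he he', c + c', by rw [lie_add]; abel⟩
  | tmul r y =>
    have hy : y ∈ (LieSubalgebra.engel K x).toSubmodule ⊔ LinearMap.range (LieAlgebra.ad K 𝔤 x) := by
      rw [engel_sup_range]; trivial
    obtain ⟨e, he, f, ⟨c, rfl⟩, rfl⟩ := Submodule.mem_sup.1 hy
    refine ⟨r ⊗ₜ e, ?_, r ⊗ₜ c, ?_⟩
    · exact tmul_mem_span R _ β r he
    · rw [LieAlgebra.ExtendScalars.bracket_tmul, one_mul, TensorProduct.tmul_add]; rfl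

lemma exists_auto [CharZero K] (R : Type*) [CommRing R] [Algebra K R] (s : R) {N : ℕ}
    (hs : s ^ N = 0) (x z : 𝔤) {d : Type*} [Fintype d]
    (β : Module.Basis d K (LieSubalgebra.engel K x)) (m : ℕ) :
    ∃ θ : (R ⊗[K] 𝔤) ≃ₗ⁅R⁆ (R ⊗[K] 𝔤),
    ∃ a ∈ Submodule.span R (Set.range fun j => (1 : R) ⊗ₜ[K] (β j : 𝔤)), ∃ w,
    θ ((1 : R) ⊗ₜ[K] x + s • (1 : R) ⊗ₜ[K] z) = (1 : R) ⊗ₜ[K] x + s • a + s ^ (m+1) • w := by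
  let _ : Algebra ℚ R := ((algebraMap K R).comp (algebraMap ℚ K)).toAlgebra
  induction m with
  | zero => exact ⟨LieEquiv.refl, 0, zero_mem _, 1 ⊗ₜ z, by simp⟩
  | succ m ih =>
    obtain ⟨θ, a, ha, w, hθ⟩ := ih
    obtain ⟨e, he, c, rfl⟩ := exists_split R x β w
    have hn : IsNilpotent (LieAlgebra.ad R (R ⊗[K] 𝔤) (s ^ (m+1) • c)) := by
      refine ⟨N, ?_⟩
      rw [map_smul, smul_pow, ← pow_mul, mul_comm, pow_mul, hs, zero_pow (by omega), zero_smul]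
    obtain ⟨η, hη⟩ := exists_exp (s ^ (m+1) • c) hn
    obtain ⟨w', hw'⟩ := hη ((1 : R) ⊗ₜ[K] x + s • a + s ^ (m+1) • (e + ⁅(1 : R) ⊗ₜ[K] x, c⁆))
    refine ⟨θ.trans η, a + s ^ m • e, add_mem ha (Submodule.smul_mem _ _ he),
      ⁅c, a⁆ + s ^ m • ⁅c, e + ⁅(1 : R) ⊗ₜ[K] x, c⁆⁆ + s ^ m • ⁅c, ⁅c, w'⁆⁆, ?_⟩
    rw [LieEquiv.trans_apply, hθ, hw']
    simp only [lie_add, smul_lie, lie_smul, smul_add, smul_smul]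
    rw [← lie_skew ((1 : R) ⊗ₜ[K] x) c]
    simp only [lie_neg, smul_neg]
    ring_nf
    abel

lemma eval_span_eq_zero [Infinite K] (R : Type*) [CommRing R] [Algebra K R] {ι d : Type*} [Fintype ι]
    [Fintype d] (b : Module.Basis ι K 𝔤) (P : MvPolynomial ι K) (β : d → 𝔤)
    (hP : ∀ y ∈ Submodule.span K (Set.range β), MvPolynomial.aeval (b.repr y) P = 0)
    (y : R ⊗[K] 𝔤) (hy : y ∈ Submodule.span R (Set.range fun j => (1 : R) ⊗ₜ[K] (β j))) :
    MvPolynomial.aeval ((Algebra.TensorProduct.basis R b).repr y) P = 0 := by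
  obtain ⟨c, rfl⟩ := (Submodule.mem_span_range_iff_exists_fun R).1 hy
  let Q : MvPolynomial d K := MvPolynomial.aeval
    (fun i => ∑ j, MvPolynomial.C (b.repr (β j) i) * MvPolynomial.X j) P
  have hQ : Q = 0 := by
    refine MvPolynomial.funext fun v => ?_
    rw [map_zero, ← hP (∑ j, v j • β j) (Submodule.sum_mem _ fun j _ =>
      Submodule.smul_mem _ _ (Submodule.subset_span ⟨j, rfl⟩))]
    rw [← MvPolynomial.coe_aeval_eq_eval, RingHom.coe_coe, ← AlgHom.comp_apply]
    congr 1
    refine MvPolynomial.algHom_ext fun i => ?_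
    simp [mul_comm]
  have : MvPolynomial.aeval c Q = 0 := by rw [hQ, map_zero]
  rw [← this, ← AlgHom.comp_apply]
  congr 1
  refine MvPolynomial.algHom_ext fun i => ?_
  simp [mul_comm, Algebra.algebraMap_eq_smul_one]

lemma charpoly_lieEquiv {R G : Type*} [CommRing R] [LieRing G] [LieAlgebra R G]
    [Module.Finite R G] [Module.Free R G] (θ : G ≃ₗ⁅R⁆ G) (y : G) :
    (LieAlgebra.ad R G (θ y)).charpoly = (LieAlgebra.ad R G y).charpoly := by
  rw [← LieAlgebra.conj_ad_apply, LinearEquiv.charpoly_conj]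

lemma key_vanish [CharZero K] {ι d : Type*} [Fintype ι] [DecidableEq ι] [Fintype d] (x z : 𝔤)
    (b : Module.Basis ι K 𝔤) (β : Module.Basis d K (LieSubalgebra.engel K x)) (n : ℕ)
    (hβ : ∀ y ∈ Submodule.span K (Set.range fun j => (β j : 𝔤)),
      MvPolynomial.aeval (b.repr y)
      ((LinearMap.polyCharpoly (LieHom.toLinearMap (LieAlgebra.ad K 𝔤)) b).coeff n) = 0)
    (R : Type*) [CommRing R] [Algebra K R] (φ : Polynomial K →ₐ[K] R) (N : ℕ)
    (hs0 : φ Polynomial.X ^ N = 0) : φ (MvPolynomial.aeval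
      (fun i => Polynomial.C (b.repr x i) + Polynomial.X * Polynomial.C (b.repr z i))
      ((LinearMap.polyCharpoly (LieHom.toLinearMap (LieAlgebra.ad K 𝔤)) b).coeff n)) = 0 := by
  set P := (LinearMap.polyCharpoly (LieHom.toLinearMap (LieAlgebra.ad K 𝔤)) b).coeff n with hPdef
  set s : R := φ Polynomial.X with hs1
  have hs : s ^ N = 0 := hs0
  obtain ⟨θ, a, ha, w, hθ⟩ := exists_auto R s hs x z β N
  rw [pow_succ, hs, zero_mul, zero_smul, add_zero] at hθ
  have hx : (1 : R) ⊗ₜ[K] x ∈ Submodule.span R (Set.range fun j => (1 : R) ⊗ₜ[K] (β j : 𝔤)) := by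
    exact tmul_mem_span R _ β 1 (LieSubalgebra.self_mem_engel K x)
  have h0 := eval_span_eq_zero R b P (fun j => (β j : 𝔤)) hβ _ (add_mem hx (Submodule.smul_mem _ s ha))
  rw [← hθ, hPdef, ← charpoly_coeff_baseChange R b, charpoly_lieEquiv, charpoly_coeff_baseChange R b] at h0
  rw [← h0, ← AlgHom.comp_apply]
  congr 1
  refine MvPolynomial.algHom_ext fun i => ?_
  simp only [AlgHom.comp_apply, MvPolynomial.aeval_X, map_add, map_mul, map_smul,
    Algebra.TensorProduct.basis_repr_tmul, Finsupp.add_apply, Finsupp.smul_apply]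
  simp [s, ← Polynomial.algebraMap_eq, Algebra.algebraMap_eq_smul_one]

/-- every Engel subalgebra contains a regular element -/
lemma exists_regular_mem_engel [CharZero K] (x : 𝔤) :
    ∃ y ∈ LieSubalgebra.engel K x, LieAlgebra.IsRegular K y := by
  classical
  by_contra! hcon
  let b := Module.Free.chooseBasis K 𝔤
  let P := (LinearMap.polyCharpoly (LieHom.toLinearMap (LieAlgebra.ad K 𝔤)) b).coeff
    (LieAlgebra.rank K 𝔤)
  have hP0 : ∀ y : 𝔤, LieAlgebra.IsRegular K y ↔ MvPolynomial.aeval (b.repr y) P ≠ 0 := fun y => by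
    rw [LieAlgebra.isRegular_iff_coeff_polyCharpoly_rank_ne_zero K b y, ← MvPolynomial.coe_aeval_eq_eval]
    rfl
  let β := Module.Free.chooseBasis K (LieSubalgebra.engel K x)
  have hβ : ∀ y ∈ Submodule.span K (Set.range fun j => (β j : 𝔤)),
      MvPolynomial.aeval (b.repr y) P = 0 := by
    intro y hy
    have hy' : y ∈ (LieSubalgebra.engel K x).toSubmodule := by
      refine (Submodule.span_le.2 ?_) hy
      rintro _ ⟨j, rfl⟩
      exact (β j).2
    have := hcon y hy'
    rw [hP0, not_not] at this
    exact this
  obtain ⟨y0, hy0⟩ := LieAlgebra.exists_isRegular K 𝔤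
  let z := y0 - x
  let p : Polynomial K := MvPolynomial.aeval
    (fun i => Polynomial.C (b.repr x i) + Polynomial.X * Polynomial.C (b.repr z i)) P
  have key : ∀ N : ℕ, Polynomial.X ^ N ∣ p := by
    intro N
    have h1 := key_vanish x z b β _ hβ _
      (Ideal.Quotient.mkₐ K (Ideal.span {(Polynomial.X : Polynomial K) ^ N})) N (by
        rw [← map_pow]; exact Ideal.Quotient.eq_zero_iff_mem.2 (Ideal.mem_span_singleton_self _))
    rw [← Ideal.mem_span_singleton]
    exact Ideal.Quotient.eq_zero_iff_mem.1 h1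
  have hp : p = 0 := by
    by_contra hp
    have := Polynomial.degree_le_of_dvd (key (p.natDegree + 1)) hp
    rw [Polynomial.degree_X_pow, Polynomial.degree_eq_natDegree hp] at this
    norm_cast at this
    omega
  refine (hP0 y0).1 hy0 ?_
  have : Polynomial.aeval (1 : K) p = 0 := by rw [hp, map_zero]
  rw [← this, ← AlgHom.comp_apply]
  congr 1
  refine MvPolynomial.algHom_ext fun i => ?_
  simp [z]

end lemA
end CVP

namespace CVP
open TensorProduct
set_option linter.unusedSectionVars false
section partA2
open LieAlgebra LieSubalgebra Module
variable {K 𝔤 : Type*} [Field K] [LieRing 𝔤] [LieAlgebra K 𝔤] [FiniteDimensional K 𝔤]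

lemma finrank_le_card [Infinite K] : (finrank K 𝔤 : Cardinal) ≤ Cardinal.mk K :=
  Cardinal.natCast_le_aleph0.trans <| Cardinal.infinite_iff.mp ‹Infinite K›

lemma isCartan_engel_of_regular [Infinite K] {x : 𝔤} (hx : LieAlgebra.IsRegular K x) :
    (engel K x).IsCartanSubalgebra := by
  refine ⟨?_, normalizer_engel _ _⟩
  apply isNilpotent_of_forall_le_engel
  intro y hy
  set Ex : {engel K z | z ∈ engel K x} := ⟨engel K x, x, self_mem_engel _ _, rfl⟩
  suffices IsBot Ex from @this ⟨engel K y, y, hy, rfl⟩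
  apply engel_isBot_of_isMin finrank_le_card (engel K x) Ex le_rfl
  rintro ⟨_, y, hy, rfl⟩ hyx
  suffices finrank K (engel K x) ≤ finrank K (engel K y) by
    suffices engel K y = engel K x from this.ge
    apply LieSubalgebra.toSubmodule_injective
    exact Submodule.eq_of_le_of_finrank_le hyx this
  rw [(isRegular_iff_finrank_engel_eq_rank K x).mp hx]
  apply rank_le_finrank_engel

lemma cartan_le_engel (t : LieSubalgebra K 𝔤) [t.IsCartanSubalgebra] {y : 𝔤} (hy : y ∈ t) :
    t ≤ engel K y := by
  intro z hz
  obtain ⟨k, hk⟩ := (mem_zeroRootSubalgebra K 𝔤 t z).1 (le_zeroRootSubalgebra K 𝔤 t hz) ⟨y, hy⟩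
  exact (mem_engel_iff K y z).2 ⟨k, hk⟩

lemma finrank_cartan [CharZero K] (t : LieSubalgebra K 𝔤) [t.IsCartanSubalgebra] :
    finrank K t = LieAlgebra.rank K 𝔤 := by
  classical
  have hex : ∃ n, ∃ x ∈ t, finrank K (engel K x) = n := ⟨_, 0, zero_mem _, rfl⟩
  obtain ⟨x, hx, hn⟩ := Nat.find_spec hex
  have hmin : ∀ y ∈ t, finrank K (engel K x) ≤ finrank K (engel K y) := by
    intro y hy
    rw [hn]
    exact Nat.find_min' hex ⟨y, hy, rfl⟩
  set Ex : {engel K z | z ∈ t} := ⟨engel K x, x, hx, rfl⟩ with hEx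
  have hbot : IsBot Ex := by
    apply engel_isBot_of_isMin finrank_le_card t Ex (cartan_le_engel t hx)
    rintro ⟨_, y, hy, rfl⟩ hyx
    suffices engel K y = engel K x from this.ge
    apply LieSubalgebra.toSubmodule_injective
    exact Submodule.eq_of_le_of_finrank_le hyx (hmin y hy)
  have hle : engel K x ≤ t := by
    conv_rhs => rw [← zeroRootSubalgebra_eq_of_is_cartan K 𝔤 t]
    intro z hz
    rw [mem_zeroRootSubalgebra]
    intro y
    have : engel K x ≤ engel K (y : 𝔤) := @hbot ⟨engel K (y : 𝔤), y, y.2, rfl⟩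
    exact (mem_engel_iff K (y : 𝔤) z).1 (this hz)
  obtain ⟨y, hy, hreg⟩ := exists_regular_mem_engel (K := K) x
  refine le_antisymm ?_ ?_
  · rw [← (isRegular_iff_finrank_engel_eq_rank K y).1 hreg]
    exact Submodule.finrank_mono (show t.toSubmodule ≤ (engel K y).toSubmodule from cartan_le_engel t (hle hy))
  · refine (rank_le_finrank_engel K x).trans ?_
    exact Submodule.finrank_mono (show (engel K x).toSubmodule ≤ t.toSubmodule from hle)

lemma finrank_centralizer_engel [CharZero K] (x : 𝔤) (W : Submodule K 𝔤)
    (hW : ∀ c ∈ W, ∀ e ∈ engel K x, ⁅e, c⁆ = 0) : finrank K W ≤ LieAlgebra.rank K 𝔤 := by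
  obtain ⟨y, hy, hreg⟩ := exists_regular_mem_engel (K := K) x
  rw [← (isRegular_iff_finrank_engel_eq_rank K y).1 hreg]
  refine Submodule.finrank_mono (show W ≤ (engel K y).toSubmodule from fun c hc => ?_)
  exact (mem_engel_iff K y c).2 ⟨1, by simpa using hW c hc y hy⟩
end partA2
end CVP

namespace CVP
open TensorProduct
set_option linter.unusedSectionVars false
section partB
open LieAlgebra LieSubalgebra Module
variable {K 𝔤 : Type*} [Field K] [LieRing 𝔤] [LieAlgebra K 𝔤] [FiniteDimensional K 𝔤]

lemma hasTrivialRadical_quot (hred : radical K 𝔤 = center K 𝔤) :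
    HasTrivialRadical K (𝔤 ⧸ center K 𝔤) := by
  rw [hasTrivialRadical_iff_no_abelian_ideals]
  intro I hI
  let π := LieSubmodule.Quotient.mk' (center K 𝔤)
  have hπ : ∀ x y : 𝔤, π ⁅x, y⁆ = ⁅π x, π y⁆ := fun x y => rfl
  let J : LieIdeal K 𝔤 := { I.toSubmodule.comap (π : 𝔤 →ₗ[K] 𝔤 ⧸ center K 𝔤) with
    lie_mem := by
      intro x m hm
      change π ⁅x, m⁆ ∈ I
      rw [hπ]
      exact lie_mem_right K _ I _ _ hm }
  have hJ1 : ⁅J, J⁆ ≤ center K 𝔤 := by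
    rw [LieSubmodule.lie_le_iff]
    intro x hx y hy
    rw [← LieSubmodule.Quotient.mk_eq_zero]
    change π ⁅x, y⁆ = 0
    rw [hπ]
    have := congrArg Subtype.val (hI.trivial ⟨π x, hx⟩ ⟨π y, hy⟩)
    exact this
  have hJ : IsSolvable J := by
    refine IsSolvable.mk (R := K) (k := 2) ?_
    rw [LieIdeal.derivedSeries_eq_bot_iff]
    change ⁅⁅J, J⁆, ⁅J, J⁆⁆ = ⊥
    rw [_root_.eq_bot_iff, LieSubmodule.lie_le_iff]
    intro x hx y hy
    rw [LieSubmodule.mem_bot]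
    have := (LieModule.mem_maxTrivSubmodule (R := K) (L := 𝔤) (M := 𝔤) y).1 (hJ1 hy) x
    exact this
  have hJ2 : J ≤ center K 𝔤 := by
    rw [← hred]
    exact (LieIdeal.solvable_iff_le_radical K 𝔤 J).1 hJ
  rw [_root_.eq_bot_iff]
  intro a ha
  obtain ⟨x, rfl⟩ := LieSubmodule.Quotient.surjective_mk' (center K 𝔤) a
  rw [LieSubmodule.mem_bot, LieSubmodule.Quotient.mk_eq_zero]
  exact hJ2 ha

lemma mem_center_of_killing [CharZero K] (hred : radical K 𝔤 = center K 𝔤) {x : 𝔤}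
    (hx : ∀ y, killingForm K 𝔤 x y = 0) : x ∈ center K 𝔤 := by
  rw [← hred]
  refine killingCompl_top_le_radical K 𝔤 ?_
  rw [LieIdeal.mem_killingCompl]
  intro y _
  rw [LieModule.traceForm_comm]
  exact hx y

lemma exists_functional [CharZero K] (hred : radical K 𝔤 = center K 𝔤) (f : 𝔤 →ₗ[K] K) :
    ∃ f' : 𝔤 →ₗ[K] K, (∀ z ∈ center K 𝔤, f' z = f z) ∧ ∀ x y : 𝔤, f' ⁅x, y⁆ = 0 := by
  have := hasTrivialRadical_quot hred
  let q := 𝔤 ⧸ center K 𝔤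
  let π := LieSubmodule.Quotient.mk' (center K 𝔤)
  have hπ : ∀ x y : 𝔤, π ⁅x, y⁆ = ⁅π x, π y⁆ := fun x y => rfl
  have hker : ∀ x : 𝔤, π x = 0 → ∀ y, ⁅y, x⁆ = 0 := fun x hx y =>
    (LieModule.mem_maxTrivSubmodule (R := K) (L := 𝔤) (M := 𝔤) x).1
      ((LieSubmodule.Quotient.mk_eq_zero _).1 hx) y
  obtain ⟨σ, hσ⟩ := (π : 𝔤 →ₗ[K] q).exists_rightInverse_of_surjective
    (LinearMap.range_eq_top.2 (LieSubmodule.Quotient.surjective_mk' (center K 𝔤)))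
  have hσ' : ∀ a, π (σ a) = a := fun a => LinearMap.congr_fun hσ a
  have hbr : ∀ x y : 𝔤, ⁅σ (π x), σ (π y)⁆ = ⁅x, y⁆ := by
    intro x y
    have h1 := hker (σ (π y) - y) (by rw [map_sub, hσ', sub_self]) (σ (π x))
    have h2 := hker (σ (π x) - x) (by rw [map_sub, hσ', sub_self]) y
    rw [lie_sub, sub_eq_zero] at h1 h2
    rw [h1, ← lie_skew, h2, lie_skew]
  let B : LinearMap.BilinForm K q := LinearMap.mk₂ K (fun a b => f ⁅σ a, σ b⁆)
    (by intros; simp) (by intros; simp) (by intros; simp) (by intros; simp)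
  have hB : ∀ x y : 𝔤, B (π x) (π y) = f ⁅x, y⁆ := fun x y => by
    change f _ = _
    rw [hbr]
  have hnd := LieAlgebra.IsKilling.killingForm_nondegenerate K q
  let D : q →ₗ[K] q := ((LinearMap.BilinForm.toDual (killingForm K q) hnd).symm : Dual K q →ₗ[K] q) ∘ₗ B
  have hD : ∀ a b, killingForm K q (D a) b = B a b := by
    intro a b
    have := LinearMap.BilinForm.apply_toDual_symm_apply (B := killingForm K q) (hB := hnd) (B a) b
    exact this
  have hinj : ∀ a b, (∀ c, killingForm K q a c = killingForm K q b c) → a = b := by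
    intro a b hab
    exact LinearMap.ker_eq_bot.1 (LieAlgebra.IsKilling.ker_killingForm_eq_bot K q) (LinearMap.ext hab)
  let D' : LieDerivation K q q :=
    { D with
      leibniz' := by
        intro a b
        change D _ = ⁅a, D b⁆ - ⁅b, D a⁆
        apply hinj
        intro c
        obtain ⟨x, rfl⟩ := LieSubmodule.Quotient.surjective_mk' (center K 𝔤) a
        obtain ⟨y, rfl⟩ := LieSubmodule.Quotient.surjective_mk' (center K 𝔤) b
        obtain ⟨w, rfl⟩ := LieSubmodule.Quotient.surjective_mk' (center K 𝔤) c
        change killingForm K q (D ⁅π x, π y⁆) (π w) = killingForm K q (⁅π x, D (π y)⁆ - ⁅π y, D (π x)⁆) (π w)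
        rw [map_sub, LinearMap.sub_apply, LieModule.traceForm_apply_lie_apply',
          LieModule.traceForm_apply_lie_apply', hD, hD, hD, ← hπ, ← hπ, ← hπ, hB, hB, hB, lie_lie, map_sub]
        ring }
  obtain ⟨s, hs⟩ := LieDerivation.IsKilling.exists_eq_ad D'
  have hDs : ∀ a, D a = ⁅s, a⁆ := fun a => by
    have : D' a = ⁅s, a⁆ := by rw [← hs, ← LieDerivation.coeFn_coe, LieDerivation.coe_ad_apply_eq_ad_apply]; rfl
    exact this
  refine ⟨f - (killingForm K q s) ∘ₗ (π : 𝔤 →ₗ[K] q), fun z hz => ?_, fun x y => ?_⟩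
  · have : π z = 0 := (LieSubmodule.Quotient.mk_eq_zero _).2 hz
    simp [this]
  · have h1 : f ⁅x, y⁆ = killingForm K q s ⁅π x, π y⁆ := by
      rw [← hB, ← hD, hDs, LieModule.traceForm_apply_lie_apply]
    simp only [LinearMap.sub_apply, LinearMap.comp_apply, h1]
    change _ - killingForm K q s (π ⁅x, y⁆) = 0
    rw [hπ, sub_self]

/-- a nondegenerate form differing from the Killing form by a form killing brackets -/
lemma exists_form [CharZero K] (hred : radical K 𝔤 = center K 𝔤) :
    ∃ c : LinearMap.BilinForm K 𝔤, (∀ x y z : 𝔤, c ⁅x, y⁆ z = 0) ∧ (∀ x y z : 𝔤, c z ⁅x, y⁆ = 0) ∧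
      (∀ x y, c x y = c y x) ∧ ∀ x, (∀ y, killingForm K 𝔤 x y + c x y = 0) → x = 0 := by
  classical
  let Z := (center K 𝔤).toSubmodule
  let e := Module.Free.chooseBasis K Z
  have hf : ∀ i, ∃ f : 𝔤 →ₗ[K] K, (∀ z : Z, f z = e.coord i z) ∧ ∀ x y : 𝔤, f ⁅x, y⁆ = 0 := by
    intro i
    obtain ⟨F, hF⟩ := LinearMap.exists_extend (e.coord i)
    obtain ⟨f, hf1, hf2⟩ := exists_functional hred F
    exact ⟨f, fun z => by rw [hf1 z z.2, ← hF]; rfl, hf2⟩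
  choose f hf1 hf2 using hf
  refine ⟨∑ i, LinearMap.BilinForm.linMulLin (f i) (f i), ?_, ?_, ?_, ?_⟩
  · intro x y z; simp [LinearMap.sum_apply, hf2]
  · intro x y z; simp [LinearMap.sum_apply, hf2]
  · intro x y; simp [LinearMap.sum_apply, mul_comm]
  · intro x hx
    simp only [LinearMap.sum_apply, LinearMap.BilinForm.linMulLin_apply] at hx
    have h1 : ∀ j, f j x = 0 := by
      intro j
      have h2 := hx (e j : 𝔤)
      have h3 : killingForm K 𝔤 x (e j : 𝔤) = 0 := by
        have : LieAlgebra.ad K 𝔤 (e j : 𝔤) = 0 := by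
          ext y
          have := (LieModule.mem_maxTrivSubmodule (R := K) (L := 𝔤) (M := 𝔤) _).1 (e j).2 y
          simp only [LieAlgebra.ad_apply, LinearMap.zero_apply]
          rw [← lie_skew]; rw [this, neg_zero]
        rw [killingForm_apply_apply, this]; simp
      rw [h3, zero_add] at h2
      simpa [hf1, Finsupp.single_apply] using h2
    have h4 : x ∈ center K 𝔤 := mem_center_of_killing hred fun y => by simpa [h1] using hx y
    have h5 : e.repr ⟨x, h4⟩ = 0 := by
      ext i
      have := hf1 i ⟨x, h4⟩
      rw [h1] at this
      simpa using this.symm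
    have h6 : (⟨x, h4⟩ : Z) = 0 := by simpa using h5
    simpa using congrArg Subtype.val h6

lemma exists_pow_split (x : 𝔤) : ∃ n : ℕ, (∀ e ∈ engel K x, ((LieAlgebra.ad K 𝔤 x) ^ n) e = 0) ∧
    ∀ w, ∃ e ∈ engel K x, ∃ w', w = e + ((LieAlgebra.ad K 𝔤 x) ^ n) w' := by
  obtain ⟨n, hn⟩ := Filter.eventually_atTop.1
    ((LinearMap.eventually_isCompl_ker_pow_range_pow (LieAlgebra.ad K 𝔤 x)).and
    (LinearMap.eventually_iSup_ker_pow_eq (LieAlgebra.ad K 𝔤 x)))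
  obtain ⟨h1, h2⟩ := hn n le_rfl
  refine ⟨n, fun e he => ?_, fun w => ?_⟩
  · obtain ⟨m, hm⟩ := (mem_engel_iff K x e).1 he
    have : e ∈ LinearMap.ker ((LieAlgebra.ad K 𝔤 x) ^ n) := by
      rw [← h2]
      exact Submodule.mem_iSup_of_mem m hm
    exact this
  · have : w ∈ LinearMap.ker ((LieAlgebra.ad K 𝔤 x) ^ n) ⊔ LinearMap.range ((LieAlgebra.ad K 𝔤 x) ^ n) := by
      rw [h1.codisjoint.eq_top]; trivial
    obtain ⟨e, he, f, ⟨w', rfl⟩, rfl⟩ := Submodule.mem_sup.1 this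
    exact ⟨e, (mem_engel_iff K x e).2 ⟨n, he⟩, w', rfl⟩

lemma killing_ad_pow (y a w : 𝔤) (n : ℕ) : killingForm K 𝔤 a (((LieAlgebra.ad K 𝔤 y) ^ n) w) =
    (-1) ^ n * killingForm K 𝔤 (((LieAlgebra.ad K 𝔤 y) ^ n) a) w := by
  induction n generalizing w with
  | zero => simp
  | succ n ih =>
    rw [pow_succ, Module.End.mul_apply, ih, ← pow_succ, pow_succ' (LieAlgebra.ad K 𝔤 y),
      Module.End.mul_apply, LieAlgebra.ad_apply, LieAlgebra.ad_apply,
      LieModule.traceForm_apply_lie_apply', pow_succ]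
    ring

lemma engel_abelian [CharZero K] (hred : radical K 𝔤 = center K 𝔤) {y : 𝔤}
    (hy : LieAlgebra.IsRegular K y) : IsLieAbelian (engel K y) := by
  have hC := isCartan_engel_of_regular hy
  change LieModule.IsTrivial (engel K y) (engel K y)
  rw [← LieModule.disjoint_lowerCentralSeries_maxTrivSubmodule_iff K (engel K y) (engel K y),
    disjoint_iff_inf_le]
  intro z hz
  have hz0 : ∀ w : engel K y, killingForm K 𝔤 z w = 0 := by
    intro w
    have := LieModule.lowerCentralSeries_one_inf_center_le_ker_traceForm K (engel K y) 𝔤 hz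
    exact LinearMap.congr_fun this w
  obtain ⟨n, hn1, hn2⟩ := exists_pow_split (K := K) y
  have hz1 : ∀ w, killingForm K 𝔤 z w = 0 := by
    intro w
    obtain ⟨e, he, w', rfl⟩ := hn2 w
    rw [map_add, hz0 ⟨e, he⟩, killing_ad_pow, hn1 z z.2]
    simp
  obtain ⟨c, hc1, -, -, hc⟩ := exists_form hred
  have hz2 : ∀ w, c z w = 0 := by
    intro w
    have h1 : z ∈ LieModule.lowerCentralSeries K (engel K y) (engel K y) 1 := hz.1
    rw [LieModule.lowerCentralSeries_succ, LieModule.lowerCentralSeries_zero, ← LieSubmodule.mem_toSubmodule,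
      LieSubmodule.lieIdeal_oper_eq_linear_span'] at h1
    refine Submodule.span_induction (p := fun (v : engel K y) _ => c (v : 𝔤) w = 0) ?_ ?_ ?_ ?_ h1
    · rintro v ⟨a, -, b, -, rfl⟩
      exact hc1 a b w
    · simp
    · intro a b _ _ ha hb
      simp [ha, hb]
    · intro r a _ ha
      simp [ha]
  rw [LieSubmodule.mem_bot]
  exact Subtype.ext (hc z fun w => by rw [hz1, hz2, add_zero])

lemma engel_eq_cent [CharZero K] (hred : radical K 𝔤 = center K 𝔤) {y : 𝔤}
    (hy : LieAlgebra.IsRegular K y) (z : 𝔤) : z ∈ engel K y ↔ ⁅y, z⁆ = 0 := by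
  constructor
  · intro hz
    have := (engel_abelian hred hy).trivial ⟨y, self_mem_engel K y⟩ ⟨z, hz⟩
    exact congrArg Subtype.val this
  · intro h
    exact (mem_engel_iff K y z).2 ⟨1, by simpa using h⟩
end partB
end CVP

namespace CVP
open TensorProduct
set_option linter.unusedSectionVars false
section partC
open Module
universe u v

/-- Powers of `A - μ`. -/
def gen {R V : Type*} [Field R] [AddCommGroup V] [Module R V] (A : V →ₗ[R] V) (μ : R) (m : ℕ) :
    V →ₗ[R] V := ((A - μ • (1 : End R V) : End R V) ^ m : End R V)

lemma gen_succ {R V : Type*} [Field R] [AddCommGroup V] [Module R V] (A : V →ₗ[R] V) (μ : R) (m : ℕ)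
    (x : V) : gen A μ (m + 1) x = A (gen A μ m x) - μ • gen A μ m x := by
  rw [gen, pow_succ', Module.End.mul_apply]; rfl

lemma gen_zero {R V : Type*} [Field R] [AddCommGroup V] [Module R V] (A : V →ₗ[R] V) (μ : R)
    (x : V) : gen A μ 0 x = x := rfl

lemma mem_iff_mkQ {R V : Type*} [Field R] [AddCommGroup V] [Module R V] (W : Submodule R V) (x : V) :
    x ∈ W ↔ W.mkQ x = 0 := (Submodule.Quotient.mk_eq_zero W).symm

lemma trace_quot {R : Type*} {V : Type*} [Field R] [AddCommGroup V] [Module R V]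
    [FiniteDimensional R V] (f : V →ₗ[R] V) (v : V) (hv : v ≠ 0) (a : R) (hf : f v = a • v)
    (h : R ∙ v ≤ (R ∙ v).comap f) :
    LinearMap.trace R V f = a + LinearMap.trace R (V ⧸ (R ∙ v)) ((R ∙ v).mapQ _ f h) := by
  obtain ⟨s, hs⟩ := (R ∙ v).mkQ.exists_rightInverse_of_surjective (Submodule.range_mkQ _)
  have hs' : ∀ q, (R ∙ v).mkQ (s q) = q := fun q => LinearMap.congr_fun hs q
  obtain ⟨ψ, hψ⟩ := Projective.exists_dual_eq_one R hv
  let φ : V →ₗ[R] R := ψ ∘ₗ (LinearMap.id - s ∘ₗ (R ∙ v).mkQ)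
  have hφ : ∀ x, x - s ((R ∙ v).mkQ x) = φ x • v := by
    intro x
    have : x - s ((R ∙ v).mkQ x) ∈ R ∙ v := by
      rw [mem_iff_mkQ, map_sub, hs', sub_self]
    obtain ⟨c, hc⟩ := Submodule.mem_span_singleton.1 this
    have : φ x = c := by
      change ψ (x - s ((R ∙ v).mkQ x)) = c
      rw [← hc, map_smul, hψ, smul_eq_mul, mul_one]
    rw [this, hc]
  have e1 : f = (f ∘ₗ s) ∘ₗ (R ∙ v).mkQ + LinearMap.smulRight φ (a • v) := by
    ext x
    have := congrArg f (hφ x)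
    rw [map_sub, map_smul, hf] at this
    simp only [LinearMap.add_apply, LinearMap.comp_apply, LinearMap.smulRight_apply, ← this]
    abel
  have hφv : φ v = 1 := by
    have h1 := hφ v
    have : (R ∙ v).mkQ v = 0 := by
      rw [← LinearMap.mem_ker, Submodule.ker_mkQ]; exact Submodule.mem_span_singleton_self v
    rw [this, map_zero, sub_zero] at h1
    have h2 := congrArg ψ h1
    rw [map_smul, hψ, smul_eq_mul, mul_one] at h2
    exact h2.symm
  have e2 : (R ∙ v).mapQ _ f h = (R ∙ v).mkQ ∘ₗ (f ∘ₗ s) := by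
    ext x
    have := congrArg (fun y => (R ∙ v).mkQ (f y)) (hφ x)
    simp only [map_sub, map_smul, hf] at this
    have h0 : (R ∙ v).mkQ v = 0 := by
      rw [← LinearMap.mem_ker, Submodule.ker_mkQ]; exact Submodule.mem_span_singleton_self v
    rw [h0, smul_zero, smul_zero, sub_eq_zero] at this
    exact this
  rw [e2]
  conv_lhs => rw [e1]
  rw [map_add, LinearMap.trace_comp_comm', LinearMap.trace_smulRight, map_smul, hφv, smul_eq_mul, mul_one,
    add_comm]

lemma exists_common_eigen {R : Type*} {V : Type*} [Field R] [IsAlgClosed R] [AddCommGroup V] [Module R V]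
    [FiniteDimensional R V] [Nontrivial V] (A B : End R V) (h : ∀ v, A (B v) = B (A v)) :
    ∃ v ≠ 0, ∃ a b : R, A v = a • v ∧ B v = b • v := by
  obtain ⟨a, ha⟩ := Module.End.exists_eigenvalue A
  have hm : ∀ x ∈ End.eigenspace A a, B x ∈ End.eigenspace A a := by
    intro x hx
    rw [End.mem_eigenspace_iff] at hx ⊢
    rw [h, hx, map_smul]
  have : Nontrivial (End.eigenspace A a) := Submodule.nontrivial_iff_ne_bot.2 ha
  obtain ⟨b, hb⟩ := Module.End.exists_eigenvalue (B.restrict hm)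
  obtain ⟨v, hv⟩ := hb.exists_hasEigenvector
  refine ⟨v, by simpa using hv.2, a, b, End.mem_eigenspace_iff.1 v.2, ?_⟩
  exact congrArg Subtype.val hv.apply_eq_smul

lemma trace_claim_aux {R : Type u} [Field R] [IsAlgClosed R] (D : Derivation ℤ R R) (n : ℕ) :
    ∀ (V : Type v) [AddCommGroup V] [Module R V] [FiniteDimensional R V], finrank R V = n →
    ∀ (N : V →+ V) (_ : ∀ (c : R) v, N (c • v) = D c • v + c • N v)
      (A A' w B : End R V) (_ : ∀ v, A' v = N (A v) - A (N v))
      (_ : ∀ v μ (m : ℕ), (gen A μ m) v = 0 → w v = D μ • v)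
      (_ : ∀ v, A (B v) = B (A v)) (_ : ∀ v, w (B v) = B (w v)),
      LinearMap.trace R V (A' * B) = LinearMap.trace R V (w * B) := by
  induction n with
  | zero =>
    intro V _ _ _ hn N hN A A' w B hA' hw hAB hwB
    have := Module.finrank_zero_iff.1 hn
    congr 1; exact Subsingleton.elim _ _
  | succ n ih =>
    intro V _ _ _ hn N hN A A' w B hA' hw hAB hwB
    have : Nontrivial V := Module.nontrivial_of_finrank_pos (R := R) (by omega)
    obtain ⟨v, hv, a, b, hAv, hBv⟩ := exists_common_eigen A B hAB
    -- reduction to `N v = 0`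
    have red : ∀ (N : V →+ V) (_ : ∀ (c : R) v, N (c • v) = D c • v + c • N v)
      (A' : End R V) (_ : ∀ v, A' v = N (A v) - A (N v)), N v = 0 →
        LinearMap.trace R V (A' * B) = LinearMap.trace R V (w * B) := by
      intro N hN A' hA' hNv
      let W := R ∙ v
      have hWv : W.mkQ v = 0 := by
        rw [← LinearMap.mem_ker, Submodule.ker_mkQ]; exact Submodule.mem_span_singleton_self v
      have hwv : w v = D a • v := by
        apply hw v a 1
        rw [gen_succ, gen_zero, hAv, sub_self]
      have hA'v : A' v = D a • v := by
        rw [hA', hNv, hAv, hN, hNv, map_zero, smul_zero, sub_zero, add_zero]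
      have inv : ∀ (f : End R V) (c : R), f v = c • v → W ≤ W.comap f := by
        intro f c hf
        rw [Submodule.span_singleton_le_iff_mem, Submodule.mem_comap, hf]
        exact W.smul_mem _ (Submodule.mem_span_singleton_self v)
      obtain ⟨s, hs⟩ := W.mkQ.exists_rightInverse_of_surjective (Submodule.range_mkQ _)
      have hs' : ∀ q, W.mkQ (s q) = q := fun q => LinearMap.congr_fun hs q
      have hNW : ∀ x ∈ W, N x ∈ W := by
        intro x hx
        obtain ⟨c, rfl⟩ := Submodule.mem_span_singleton.1 hx
        rw [hN, hNv, smul_zero, add_zero]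
        exact W.smul_mem _ (Submodule.mem_span_singleton_self v)
      let NQ : V ⧸ W →+ V ⧸ W := (W.mkQ : V →+ V ⧸ W).comp (N.comp (s : V ⧸ W →+ V))
      have hNQ : ∀ x, NQ (W.mkQ x) = W.mkQ (N x) := by
        intro x
        have : s (W.mkQ x) - x ∈ W := by
          rw [mem_iff_mkQ, map_sub, hs', sub_self]
        have := hNW _ this
        rw [mem_iff_mkQ, map_sub, map_sub, sub_eq_zero] at this
        exact this
      have t1 := trace_quot (A' * B) v hv (D a * b) (by
        rw [Module.End.mul_apply, hBv, map_smul, hA'v, smul_smul, mul_comm]) (inv _ (D a * b) (by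
        rw [Module.End.mul_apply, hBv, map_smul, hA'v, smul_smul, mul_comm]))
      have t2 := trace_quot (w * B) v hv (D a * b) (by
        rw [Module.End.mul_apply, hBv, map_smul, hwv, smul_smul, mul_comm]) (inv _ (D a * b) (by
        rw [Module.End.mul_apply, hBv, map_smul, hwv, smul_smul, mul_comm]))
      rw [t1, t2]
      congr 1
      have hfr : finrank R (V ⧸ W) = n := by
        have := W.finrank_quotient_add_finrank
        rw [finrank_span_singleton hv, hn] at this
        omega
      have := ih (V ⧸ W) hfr NQ ?_ (W.mapQ W A (inv A a hAv)) (W.mapQ W A' (inv A' _ hA'v))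
        (W.mapQ W w (inv w _ hwv)) (W.mapQ W B (inv B b hBv)) ?_ ?_ ?_ ?_
      · convert this using 2
        · ext x; rfl
        · ext x; rfl
      · intro c q
        obtain ⟨x, rfl⟩ := W.mkQ_surjective q
        rw [← map_smul, hNQ, hN, map_add, map_smul, map_smul, hNQ]
      · intro q
        obtain ⟨x, rfl⟩ := W.mkQ_surjective q
        rw [hNQ]
        have e : ∀ y, (W.mapQ W A (inv A a hAv)) (W.mkQ y) = W.mkQ (A y) := fun y => rfl
        rw [e, e, hNQ, ← map_sub, ← hA']; rfl
      · intro q μ m hq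
        obtain ⟨x, rfl⟩ := W.mkQ_surjective q
        have e : ∀ (m : ℕ) y, (gen (W.mapQ W A (inv A a hAv)) μ m) (W.mkQ y) =
            W.mkQ ((gen A μ m) y) := by
          intro m
          induction m with
          | zero => intro y; rfl
          | succ m ihm =>
            intro y
            rw [gen_succ, gen_succ, ihm]; rfl
        rw [e, ← LinearMap.mem_ker, W.ker_mkQ] at hq
        obtain ⟨c, hc⟩ := Submodule.mem_span_singleton.1 hq
        have hpv : ∀ (m : ℕ), (gen A μ m) v = (a - μ) ^ m • v := by
          intro m
          induction m with
          | zero => simp [gen_zero]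
          | succ m ihm =>
            rw [gen_succ, ihm, map_smul, hAv]
            module
        change W.mkQ (w x) = D μ • W.mkQ x
        by_cases hμ : a = μ
        · rw [hw x μ (m + 1), map_smul]
          rw [gen_succ, ← hc, map_smul, hAv, hμ]
          module
        · have h1 := hw (x - (c * ((a - μ) ^ m)⁻¹) • v) μ m (by
            rw [map_sub, map_smul, hpv, smul_smul, mul_assoc,
              inv_mul_cancel₀ (pow_ne_zero _ (sub_ne_zero.2 hμ)), mul_one, hc, sub_self])
          have h2 := congrArg W.mkQ h1
          simpa only [map_sub, map_smul, hwv, hWv, smul_zero, sub_zero] using h2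
      · intro q
        obtain ⟨x, rfl⟩ := W.mkQ_surjective q
        exact congrArg W.mkQ (hAB x)
      · intro q
        obtain ⟨x, rfl⟩ := W.mkQ_surjective q
        exact congrArg W.mkQ (hwB x)
    obtain ⟨ψ, hψ⟩ := Projective.exists_dual_eq_one R hv
    let Γ : End R V := - LinearMap.smulRight ψ (N v)
    have := red (N + (Γ : V →+ V)) (by
      intro c x
      simp only [AddMonoidHom.add_apply, hN]
      change _ + Γ (c • x) = _ + c • (N x + Γ x)
      rw [map_smul, smul_add, add_assoc]) (A' + (Γ * A - A * Γ)) (by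
      intro x
      simp only [AddMonoidHom.add_apply, LinearMap.add_apply, LinearMap.sub_apply, Module.End.mul_apply]
      change _ = N (A x) + Γ (A x) - A (N x + Γ x)
      rw [hA', map_add]; abel) (by
      change N v + Γ v = 0
      simp [Γ, hψ])
    rw [← this, add_mul, map_add, sub_mul, map_sub]
    have hAB' : A * B = B * A := LinearMap.ext hAB
    have : LinearMap.trace R V (A * Γ * B) = LinearMap.trace R V (Γ * A * B) := by
      rw [mul_assoc, LinearMap.trace_mul_comm, mul_assoc, ← hAB', mul_assoc]
    rw [this, sub_self, add_zero]

/-- The derivative of the eigenvalues. -/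
lemma exists_w {R : Type*} {V : Type*} [Field R] [IsAlgClosed R] [AddCommGroup V] [Module R V]
    [FiniteDimensional R V] (A : End R V) (d : R → R) :
    ∃ w : End R V, (∀ v μ (m : ℕ), (gen A μ m) v = 0 → w v = d μ • v) ∧
      ∀ B : End R V, (∀ v μ (m : ℕ), (gen A μ m) v = 0 → 
        ∃ m' : ℕ, (gen A μ m') (B v) = 0) → ∀ v, w (B v) = B (w v) := by
  classical
  have h_int : DirectSum.IsInternal (fun μ => A.maxGenEigenspace μ) := by
    refine DirectSum.isInternal_submodule_of_iSupIndep_of_iSup_eq_top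
      A.independent_maxGenEigenspace A.iSup_maxGenEigenspace_eq_top
  let e := LinearEquiv.ofBijective (DirectSum.coeLinearMap fun μ => A.maxGenEigenspace μ) h_int
  let w : End R V := (DirectSum.toModule R R V fun μ => d μ • (A.maxGenEigenspace μ).subtype) ∘ₗ e.symm.toLinearMap
  have hw : ∀ v μ (m : ℕ), (gen A μ m) v = 0 → w v = d μ • v := by
    intro v μ m hv
    have hv' : v ∈ A.maxGenEigenspace μ := Module.End.mem_maxGenEigenspace _ _ _ |>.2 ⟨m, hv⟩
    have : e.symm v = DirectSum.lof R R (fun μ => A.maxGenEigenspace μ) μ ⟨v, hv'⟩ := by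
      rw [LinearEquiv.symm_apply_eq]
      exact (DirectSum.coeLinearMap_lof (fun μ => A.maxGenEigenspace μ) μ ⟨v, hv'⟩).symm
    change (DirectSum.toModule R R V fun μ => d μ • (A.maxGenEigenspace μ).subtype) (e.symm v) = _
    rw [this, DirectSum.toModule_lof]; rfl
  refine ⟨w, hw, ?_⟩
  intro B hB v
  have htop : v ∈ ⨆ μ, A.maxGenEigenspace μ := by
    rw [A.iSup_maxGenEigenspace_eq_top]; trivial
  induction htop using Submodule.iSup_induction' with
  | mem μ x hx =>
    obtain ⟨m, hm⟩ := Module.End.mem_maxGenEigenspace _ _ _ |>.1 hx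
    obtain ⟨m', hm'⟩ := hB x μ m hm
    rw [hw _ _ _ hm, hw _ _ _ hm', map_smul]
  | zero => simp
  | add x y _ _ hx hy => simp only [map_add, hx, hy]

end partC
end CVP

namespace CVP
open TensorProduct
set_option linter.unusedSectionVars false
section partD
open LieAlgebra LieSubalgebra Module
attribute [local instance] LieRing.ofAssociativeRing
variable {K 𝔤 : Type*} [Field K] [LieRing 𝔤] [LieAlgebra K 𝔤] [FiniteDimensional K 𝔤]
variable {L : Type*} [Field L] [Algebra K L]

/-- `D ⊗ id`. -/
noncomputable def nab (𝔤 : Type*) [LieRing 𝔤] [LieAlgebra K 𝔤]  (D : Derivation K L L) : L ⊗[K] 𝔤 →ₗ[K] L ⊗[K] 𝔤 :=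
  LinearMap.rTensor 𝔤 (D : L →ₗ[K] L)

lemma nab_tmul (D : Derivation K L L) (a : L) (x : 𝔤) : nab 𝔤 D (a ⊗ₜ x) = D a ⊗ₜ x := rfl

lemma nab_smul (D : Derivation K L L) (c : L) (v : L ⊗[K] 𝔤) :
    nab 𝔤 D (c • v) = D c • v + c • nab 𝔤 D v := by
  induction v with
  | zero => simp
  | add x y hx hy => rw [smul_add, map_add, hx, hy, map_add]; module
  | tmul a x =>
    simp only [smul_tmul', nab_tmul, smul_eq_mul, Derivation.leibniz, ← add_tmul]
    congr 1; ring

lemma nab_lie (D : Derivation K L L) (x y : L ⊗[K] 𝔤) :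
    nab 𝔤 D ⁅x, y⁆ = ⁅nab 𝔤 D x, y⁆ + ⁅x, nab 𝔤 D y⁆ := by
  induction x with
  | zero => simp
  | add x y hx hy => simp only [add_lie, map_add, hx, hy]; abel
  | tmul a x =>
    induction y with
    | zero => simp
    | add x y hx hy => simp only [lie_add, map_add, hx, hy]; abel
    | tmul b y =>
      simp only [ExtendScalars.bracket_tmul, nab_tmul, Derivation.leibniz, ← add_tmul, smul_eq_mul]
      congr 1; ring

lemma exists_formL [CharZero K] (hred : radical K 𝔤 = center K 𝔤) :
    ∃ c : LinearMap.BilinForm L (L ⊗[K] 𝔤), (∀ x y z : L ⊗[K] 𝔤, c ⁅x, y⁆ z = 0) ∧ (∀ x y z : L ⊗[K] 𝔤, c z ⁅x, y⁆ = 0) ∧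
      (∀ x y, c x y = c y x) ∧ ∀ x, (∀ y, killingForm L (L ⊗[K] 𝔤) x y + c x y = 0) → x = 0 := by
  classical
  obtain ⟨c, h1, h2, h3, h4⟩ := exists_form hred
  have hs : ∀ x y, (c.baseChange L) x y = (c.baseChange L) y x := by
    intro x y
    induction x with
    | zero => simp
    | add x y hx hy => simp only [map_add, LinearMap.add_apply, hx, hy]
    | tmul a x =>
      induction y with
      | zero => simp
      | add x y hx hy => simp only [map_add, LinearMap.add_apply, hx, hy]
      | tmul b y => simp only [LinearMap.BilinForm.baseChange_tmul, h3 x y, mul_comm]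
  have hc1 : ∀ x y z : L ⊗[K] 𝔤, (c.baseChange L) ⁅x, y⁆ z = 0 := by
    intro x y z
    induction x with
    | zero => simp
    | add x y hx hy => simp only [map_add, add_lie, LinearMap.add_apply, hx, hy, add_zero]
    | tmul a x =>
      induction y with
      | zero => simp
      | add x y hx hy => simp only [map_add, lie_add, LinearMap.add_apply, hx, hy, add_zero]
      | tmul b y =>
        induction z with
        | zero => simp
        | add x y hx hy => simp only [map_add, hx, hy, add_zero]
        | tmul d z =>
          simp only [ExtendScalars.bracket_tmul, LinearMap.BilinForm.baseChange_tmul, h1, zero_smul]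
  refine ⟨c.baseChange L, hc1, fun x y z => by rw [hs, hc1], hs, ?_⟩
  intro x hx
  let b : LinearMap.BilinForm K 𝔤 := killingForm K 𝔤 + c
  have hb : b.Nondegenerate := by
    have hl : LinearMap.SeparatingLeft b := fun x hx => h4 x hx
    refine ⟨hl, ?_⟩
    intro x hx
    apply h4 x
    intro y
    have := hx y
    simp only [b, LinearMap.add_apply] at this
    rw [LieModule.traceForm_comm, h3]; exact this
  let e := Module.Free.chooseBasis K 𝔤
  let f := LinearMap.BilinForm.dualBasis b hb e
  let eL := Algebra.TensorProduct.basis L f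
  have hx' : eL.repr x = 0 := by
    ext j
    have h5 := hx (1 ⊗ₜ e j)
    have h6 : killingForm L (L ⊗[K] 𝔤) = (killingForm K 𝔤).baseChange L := LieModule.traceForm_baseChange _ _ _ _
    rw [h6] at h5
    rw [← eL.sum_repr x] at h5
    simp only [map_sum, map_smul, LinearMap.sum_apply, LinearMap.smul_apply, ← Finset.sum_add_distrib,
      ← smul_add] at h5
    have h7 : ∀ i, (killingForm K 𝔤).baseChange L (eL i) (1 ⊗ₜ e j) + c.baseChange L (eL i) (1 ⊗ₜ e j)
        = if j = i then 1 else 0 := by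
      intro i
      have := LinearMap.BilinForm.apply_dualBasis_left hb e i j
      simp only [eL, Algebra.TensorProduct.basis_apply, LinearMap.BilinForm.baseChange_tmul, ← add_smul]
      change b (f i) (e j) • ((1 : L) * 1) = _
      rw [this]; split_ifs <;> simp
    simp only [h7] at h5
    simpa using h5
  simpa using hx'

lemma mem_engel_gen [CharZero L] {X e v : L ⊗[K] 𝔤} (he : e ∈ engel L X) {μ : L} {m : ℕ}
    (hv : gen (LieAlgebra.ad L _ X) μ m v = 0) : ∃ m', gen (LieAlgebra.ad L _ X) μ m' ⁅e, v⁆ = 0 := by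
  have h1 : v ∈ (LieModule.toEnd L (L ⊗[K] 𝔤) (L ⊗[K] 𝔤) X).maxGenEigenspace μ :=
    (Module.End.mem_maxGenEigenspace _ _ _).2 ⟨m, hv⟩
  have h2 : e ∈ (LieModule.toEnd L (L ⊗[K] 𝔤) (L ⊗[K] 𝔤) X).maxGenEigenspace 0 := by
    obtain ⟨n, hn⟩ := (mem_engel_iff _ _ _).1 he
    refine (Module.End.mem_maxGenEigenspace _ _ _).2 ⟨n, ?_⟩
    rw [zero_smul, sub_zero]; exact hn
  have h3 := LieModule.lie_mem_maxGenEigenspace_toEnd h2 h1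
  rw [zero_add] at h3
  exact (Module.End.mem_maxGenEigenspace _ _ _).1 h3

/-- Key: derivatives of `X` are, modulo the range of `ad X`, in the centralizer of `engel X`. -/
lemma nab_mem [CharZero K] [IsAlgClosed L] [CharZero L] (hred : radical K 𝔤 = center K 𝔤)
    (D : Derivation K L L) (X : L ⊗[K] 𝔤) :
    ∃ p a : L ⊗[K] 𝔤, (∀ e ∈ engel L X, ⁅e, p⁆ = 0) ∧ nab 𝔤 D X = ⁅X, a⁆ + p := by
  obtain ⟨c, hc1, hc2, hc3, hc4⟩ := exists_formL (L := L) hred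
  let β : LinearMap.BilinForm L (L ⊗[K] 𝔤) := killingForm L (L ⊗[K] 𝔤) + c
  have hβ : ∀ x y, β x y = killingForm L (L ⊗[K] 𝔤) x y + c x y := fun _ _ => rfl
  have hβs : ∀ x y, β x y = β y x := by
    intro x y; rw [hβ, hβ, LieModule.traceForm_comm, hc3]
  have hinv : ∀ x y z : L ⊗[K] 𝔤, β ⁅x, y⁆ z = β x ⁅y, z⁆ := by
    intro x y z; rw [hβ, hβ, hc1, hc2, LieModule.traceForm_apply_lie_apply]
  have hinj : Function.Injective β := by
    rw [← LinearMap.ker_eq_bot, LinearMap.ker_eq_bot']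
    intro x hx
    exact hc4 x fun y => LinearMap.congr_fun hx y
  have hsurj : Function.Surjective β :=
    (LinearMap.injective_iff_surjective_of_finrank_eq_finrank Subspace.dual_finrank_eq.symm).1 hinj
  let D' : Derivation ℤ L L := D.restrictScalars ℤ
  obtain ⟨w, hw, hwB⟩ := exists_w (LieAlgebra.ad L (L ⊗[K] 𝔤) X) (fun a => D a)
  have hwe : ∀ e ∈ engel L X, w * LieAlgebra.ad L (L ⊗[K] 𝔤) e = LieAlgebra.ad L (L ⊗[K] 𝔤) e * w := by
    intro e he
    refine LinearMap.ext fun v => ?_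
    exact hwB _ (fun v μ m hv => mem_engel_gen he hv) v
  have hwz : ∀ z, ⁅X, z⁆ = 0 → z ∈ engel L X := by
    intro z hz
    rw [mem_engel_iff]; exact ⟨1, by simpa using hz⟩
  have htr : ∀ z, ⁅X, z⁆ = 0 → killingForm L (L ⊗[K] 𝔤) (nab 𝔤 D X) z =
      LinearMap.trace L _ (w * LieAlgebra.ad L (L ⊗[K] 𝔤) z) := by
    intro z hz
    rw [killingForm_apply_apply]
    refine trace_claim_aux D' _ (L ⊗[K] 𝔤) rfl (nab 𝔤 D : L ⊗[K] 𝔤 →+ L ⊗[K] 𝔤) (nab_smul D)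
      (LieAlgebra.ad L (L ⊗[K] 𝔤) X) _ w _ ?_ hw ?_ ?_
    · intro v
      change ⁅nab 𝔤 D X, v⁆ = nab 𝔤 D ⁅X, v⁆ - ⁅X, nab 𝔤 D v⁆
      rw [nab_lie]; abel
    · intro v
      change ⁅X, ⁅z, v⁆⁆ = ⁅z, ⁅X, v⁆⁆
      rw [leibniz_lie, hz, zero_lie, zero_add]
    · exact fun v => LinearMap.congr_fun (hwe z (hwz z hz)) v
  let φ : Dual L (L ⊗[K] 𝔤) := LinearMap.trace L _ ∘ₗ (LinearMap.mulLeft L w) ∘ₗ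
    (LieAlgebra.ad L (L ⊗[K] 𝔤)).toLinearMap + c (nab 𝔤 D X)
  have hφ : ∀ z, φ z = LinearMap.trace L _ (w * LieAlgebra.ad L (L ⊗[K] 𝔤) z) + c (nab 𝔤 D X) z :=
    fun z => rfl
  have hφe : ∀ e ∈ engel L X, ∀ z, φ ⁅e, z⁆ = 0 := by
    intro e he z
    rw [hφ, hc2, add_zero, LieHom.map_lie, LieRing.of_associative_ring_bracket, mul_sub, map_sub, ← mul_assoc, hwe e he,
      ← mul_assoc, LinearMap.trace_mul_comm L (w * _), mul_assoc, sub_self]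
  obtain ⟨p, hp⟩ := hsurj φ
  have hu : nab 𝔤 D X - p ∈ LinearMap.range (LieAlgebra.ad L (L ⊗[K] 𝔤) X) := by
    rw [← Subspace.forall_mem_dualAnnihilator_apply_eq_zero_iff]
    intro f hf
    obtain ⟨q, rfl⟩ := hsurj f
    have hq : ⁅X, q⁆ = 0 := by
      apply hinj
      refine LinearMap.ext fun y => ?_
      rw [← lie_skew, map_neg, LinearMap.neg_apply, hinv, map_zero, LinearMap.zero_apply]
      have := (Submodule.mem_dualAnnihilator _).1 hf ⁅X, y⁆ ⟨y, rfl⟩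
      rw [this, neg_zero]
    rw [hβs, map_sub, LinearMap.sub_apply, hp, hφ, hβ, htr q hq, sub_self]
  obtain ⟨a, ha⟩ := hu
  refine ⟨p, a, ?_, ?_⟩
  · intro e he
    apply hinj
    refine LinearMap.ext fun z => ?_
    rw [← lie_skew, map_neg, LinearMap.neg_apply, hinv, hp, hφe e he, map_zero, neg_zero]; rfl
  · rw [← LieAlgebra.ad_apply L, ha]; abel

end partD
end CVP

namespace CVP
open TensorProduct
set_option linter.unusedSectionVars false
section partD2
open LieAlgebra LieSubalgebra Module
variable {K 𝔤 : Type*} [Field K] [LieRing 𝔤] [LieAlgebra K 𝔤] [FiniteDimensional K 𝔤]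
variable {L : Type*} [Field L] [Algebra K L]

lemma main_bound [CharZero K] [IsAlgClosed L] (hred : radical K 𝔤 = center K 𝔤)
    (X Y : L ⊗[K] 𝔤) (hXY : ⁅X, Y⁆ = 0) {s : ℕ} (D : Fin s → Derivation K L L)
    (hli : LinearIndependent L fun i => (nab 𝔤 (D i) X, nab 𝔤 (D i) Y)) :
    s ≤ finrank K 𝔤 + LieAlgebra.rank K 𝔤 := by
  have : CharZero L := charZero_of_injective_algebraMap (algebraMap K L).injective
  let CE : Submodule L (L ⊗[K] 𝔤) :=
    { carrier := {p | ∀ e ∈ engel L X, ⁅e, p⁆ = 0}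
      add_mem' := fun {a b} ha hb e he => by rw [lie_add, ha e he, hb e he, add_zero]
      zero_mem' := fun e _ => lie_zero e
      smul_mem' := fun c x hx e he => by rw [lie_smul, hx e he, smul_zero] }
  have hCE : finrank L CE ≤ LieAlgebra.rank K 𝔤 := by
    rw [← rank_baseChange L]
    exact finrank_centralizer_engel X CE fun c hc e he => hc e he
  let A : (L ⊗[K] 𝔤) →ₗ[L] (L ⊗[K] 𝔤) := LieAlgebra.ad L (L ⊗[K] 𝔤) X
  let Ω := LinearMap.range A ⊔ CE
  let F : ((L ⊗[K] 𝔤) × (L ⊗[K] 𝔤)) →ₗ[L] (L ⊗[K] 𝔤) :=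
    A ∘ₗ LinearMap.snd L _ _ - (LieAlgebra.ad L (L ⊗[K] 𝔤) Y : (L ⊗[K] 𝔤) →ₗ[L] (L ⊗[K] 𝔤)) ∘ₗ LinearMap.fst L _ _
  have hF : ∀ p, F p = ⁅X, p.2⁆ - ⁅Y, p.1⁆ := fun p => rfl
  let T := Ω.comap (LinearMap.fst L (L ⊗[K] 𝔤) (L ⊗[K] 𝔤)) ⊓ LinearMap.ker F
  have hT : ∀ i, (nab 𝔤 (D i) X, nab 𝔤 (D i) Y) ∈ T := by
    intro i
    refine ⟨?_, ?_⟩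
    · obtain ⟨p, a, hp, ha⟩ := nab_mem hred (D i) X
      change nab 𝔤 (D i) X ∈ Ω
      rw [ha]
      exact Submodule.add_mem_sup ⟨a, rfl⟩ hp
    · rw [SetLike.mem_coe, LinearMap.mem_ker, hF]
      have := nab_lie (D i) X Y
      rw [hXY, map_zero] at this
      rw [← lie_skew Y, sub_neg_eq_add, add_comm]; exact this.symm
  have h1 : s ≤ finrank L T := by
    have := LinearIndependent.fintype_card_le_finrank (b := fun i => (⟨_, hT i⟩ : T))
      (LinearIndependent.of_comp T.subtype hli)
    simpa using this
  let f : T →ₗ[L] (L ⊗[K] 𝔤) := LinearMap.fst L _ _ ∘ₗ T.subtype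
  have h2 := f.finrank_range_add_finrank_ker
  have h3 : finrank L (LinearMap.range f) ≤ finrank L Ω := by
    apply Submodule.finrank_mono
    rintro _ ⟨x, rfl⟩
    exact x.2.1
  have h4 : finrank L (LinearMap.ker f) ≤ finrank L (LinearMap.ker A) := by
    have hm : ∀ x : LinearMap.ker f, ((x : T) : (L ⊗[K] 𝔤) × (L ⊗[K] 𝔤)).2 ∈ LinearMap.ker A := by
      intro x
      have h := x.1.2.2
      rw [SetLike.mem_coe, LinearMap.mem_ker, hF] at h
      have hx : x.1.1.1 = 0 := x.2
      rw [hx, lie_zero, sub_zero] at h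
      exact h
    refine LinearMap.finrank_le_finrank_of_injective
      (f := LinearMap.codRestrict _ (LinearMap.snd L _ _ ∘ₗ T.subtype ∘ₗ (LinearMap.ker f).subtype) hm) ?_
    intro x y hxy
    have h := congrArg Subtype.val hxy
    apply Subtype.ext; apply Subtype.ext
    have hx : x.1.1.1 = 0 := x.2
    have hy : y.1.1.1 = 0 := y.2
    exact Prod.ext (hx.trans hy.symm) h
  have h5 : finrank L Ω ≤ finrank L (LinearMap.range A) + finrank L CE :=
    Submodule.finrank_add_le_finrank_add_finrank _ _
  have h6 := A.finrank_range_add_finrank_ker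
  rw [Module.finrank_baseChange] at h6
  omega

end partD2
end CVP

namespace CVP
open TensorProduct
set_option linter.unusedSectionVars false
section partE
open Module

lemma exists_ext_derivation (k S T : Type*) [CommRing k] [CommRing S] [CommRing T]
    [Algebra k S] [Algebra k T] [Algebra S T] [IsScalarTower k S T] [Algebra.FormallyEtale S T]
    (d : Derivation k S T) : ∃ D : Derivation k T T, ∀ x, D (algebraMap S T x) = d x := by
  let f : T ⊗[S] KaehlerDifferential k S →ₗ[T] T := LinearMap.liftBaseChange T d.liftKaehlerDifferential
  let f' : KaehlerDifferential k T →ₗ[T] T :=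
    f ∘ₗ (KaehlerDifferential.tensorKaehlerEquivOfFormallyEtale k S T).symm.toLinearMap
  refine ⟨f'.compDer (KaehlerDifferential.D k T), fun x => ?_⟩
  change f ((KaehlerDifferential.tensorKaehlerEquivOfFormallyEtale k S T).symm
    (KaehlerDifferential.D k T (algebraMap S T x))) = _
  rw [KaehlerDifferential.tensorKaehlerEquivOfFormallyEtale_symm_D_algebraMap,
    LinearMap.liftBaseChange_tmul, one_smul, Derivation.liftKaehlerDifferential_comp_D]

lemma alg_bound (k A L : Type*) [Field k] [CharZero k] [CommRing A] [IsDomain A] [Algebra k A]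
    [Algebra.FiniteType k A] [Field L] [Algebra k L] [Algebra A L] [IsScalarTower k A L]
    [FaithfulSMul A L] [Algebra.IsAlgebraic A L] (N : ℕ)
    (H : ∀ (s : ℕ) (D : Fin s → Derivation k L L),
      (∀ c : Fin s → L, (∀ a : A, ∑ i, c i * D i (algebraMap A _ a) = 0) → c = 0) → s ≤ N) :
    ringKrullDim A ≤ N := by
  obtain ⟨s, g, hinj, h_int⟩ := exists_integral_inj_algHom_of_fg k A
  let R := MvPolynomial (Fin s) k
  let : Algebra R A := g.toRingHom.toAlgebra
  have tow1 : IsScalarTower k R A := IsScalarTower.of_algebraMap_eq' g.comp_algebraMap.symm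
  have : Algebra.IsIntegral R A := ⟨h_int⟩
  have h1 : ringKrullDim A ≤ s := by
    have : ringKrullDim R = s := by
      rw [MvPolynomial.ringKrullDim_of_isNoetherianRing, ringKrullDim_eq_zero_of_field]; simp
    rw [← this]
    refine Order.krullDim_le_of_strictMono (PrimeSpectrum.comap (algebraMap R A)) ?_
    intro p q hpq
    exact Ideal.IsIntegral.comap_lt_comap (R := R) hpq
  refine h1.trans ?_
  have hs : s ≤ N := by
    let : Algebra R L := ((algebraMap A L).comp (algebraMap R A)).toAlgebra
    have tow2 : IsScalarTower R A L := IsScalarTower.of_algebraMap_eq' rfl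
    have tow3 : IsScalarTower k R L := by
      refine IsScalarTower.of_algebraMap_eq' ?_
      rw [IsScalarTower.algebraMap_eq k A L, IsScalarTower.algebraMap_eq k R A]; rfl
    have hinj2 : Function.Injective (algebraMap R L) := by
      exact Function.Injective.comp (g := algebraMap A L) (FaithfulSMul.algebraMap_injective A L) hinj
    have : FaithfulSMul R L := (faithfulSMul_iff_algebraMap_injective R L).2 hinj2
    have : FaithfulSMul R A := (faithfulSMul_iff_algebraMap_injective R A).2 hinj
    let := FractionRing.liftAlgebra R L
    have := FractionRing.isScalarTower_liftAlgebra R L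
    have : Algebra.IsAlgebraic R L := Algebra.IsAlgebraic.trans R A L
    have : Algebra.IsAlgebraic (FractionRing R) L := (IsFractionRing.comap_isAlgebraic_iff (A := R)).1 this
    have : CharZero (FractionRing R) := charZero_of_injective_algebraMap (algebraMap k (FractionRing R)).injective
    have : Algebra.FormallyEtale (FractionRing R) L := Algebra.FormallyEtale.of_isSeparable _ _
    have : Algebra.FormallyEtale R (FractionRing R) := Algebra.FormallyEtale.of_isLocalization (nonZeroDivisors R)
    have : Algebra.FormallyEtale R L := Algebra.FormallyEtale.comp R (FractionRing R) L
    have hD : ∀ i : Fin s, ∃ D : Derivation k L L, ∀ x, D (algebraMap R L x) =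
        MvPolynomial.mkDerivation k (Pi.single i (1 : L)) x := fun i =>
      exists_ext_derivation k R L _
    choose D hD using hD
    apply H s D
    intro c hc
    ext j
    have := hc (g (MvPolynomial.X j))
    have e : ∀ i, D i (algebraMap A L (g (MvPolynomial.X j))) = if j = i then 1 else 0 := by
      intro i
      refine (hD i (MvPolynomial.X j)).trans ?_
      rw [MvPolynomial.mkDerivation_X, Pi.single_apply]
    have h2 : ∑ i, c i * (if j = i then (1 : L) else 0) = 0 := by
      exact Eq.trans (Finset.sum_congr rfl fun i _ => by rw [e i]) this
    simpa using h2
  exact_mod_cast hs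

end partE
end CVP

namespace CVP
open TensorProduct
set_option linter.unusedSectionVars false
section partE2
open Module
universe u v

lemma evalP_eq {k : Type u} [Field k] {V : Type v} [AddCommGroup V] [Module k V] [FiniteDimensional k V]
   (F : MvPolynomial (Module.Free.ChooseBasisIndex k V) k) (z : V) : CV.evalP k V F z =
    MvPolynomial.aeval (fun i => (Module.Free.chooseBasis k V).repr z i) F := rfl

lemma zar_basis (k : Type u) [Field k] (V : Type v) [AddCommGroup V] [Module k V] [FiniteDimensional k V] :
    @TopologicalSpace.IsTopologicalBasis V (CV.zar k V)
      {U | ∃ F : MvPolynomial (Module.Free.ChooseBasisIndex k V) k, U = {z | CV.evalP k V F z ≠ 0}} := by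
  let _ := CV.zar k V
  have h := TopologicalSpace.isTopologicalBasis_of_subbasis_of_inter (α := V) (r := {U | ∃ F : MvPolynomial (Module.Free.ChooseBasisIndex k V) k, U = {z | CV.evalP k V F z ≠ 0}}) rfl ?_
  · rwa [Set.insert_eq_of_mem] at h
    refine ⟨1, ?_⟩
    ext z; simp [CV.evalP]
  · rintro _ ⟨F, rfl⟩ _ ⟨G, rfl⟩
    refine ⟨F * G, ?_⟩
    ext z; simp [CV.evalP]

lemma zar_isClosed (k : Type u) [Field k] (V : Type v) [AddCommGroup V] [Module k V] [FiniteDimensional k V]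
    (F : MvPolynomial (Module.Free.ChooseBasisIndex k V) k) :
    @IsClosed V (CV.zar k V) {z | CV.evalP k V F z = 0} := by
  let _ := CV.zar k V
  rw [← isOpen_compl_iff]
  exact (zar_basis k V).isOpen ⟨F, rfl⟩

lemma zar_sep (k : Type u) [Field k] (V : Type v) [AddCommGroup V] [Module k V] [FiniteDimensional k V]
    {Z : Set V} (hZ : @IsClosed V (CV.zar k V) Z) {z : V} (hz : z ∉ Z) :
    ∃ F, (∀ w ∈ Z, CV.evalP k V F w = 0) ∧ CV.evalP k V F z ≠ 0 := by
  let _ := CV.zar k V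
  obtain ⟨_, ⟨F, rfl⟩, h1, h2⟩ := (zar_basis k V).exists_subset_of_mem_open (a := z) (u := Zᶜ) hz hZ.isOpen_compl
  refine ⟨F, fun w hw => ?_, h1⟩
  by_contra h
  exact h2 h hw

/-- Vanishing ideal. -/
noncomputable def vanI (k : Type u) [Field k] (V : Type v) [AddCommGroup V] [Module k V] [FiniteDimensional k V]
    (Z : Set V) : Ideal (MvPolynomial (Module.Free.ChooseBasisIndex k V) k) where
  carrier := {F | ∀ z ∈ Z, CV.evalP k V F z = 0}
  add_mem' := fun {a b} ha hb z hz => by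
    have h1 := ha z hz
    have h2 := hb z hz
    simp only [CV.evalP, map_add] at *
    rw [h1, h2, add_zero]
  zero_mem' := fun z _ => by simp [CV.evalP]
  smul_mem' := fun c a ha z hz => by
    have h1 := ha z hz
    simp only [CV.evalP, smul_eq_mul, map_mul] at *
    rw [h1, mul_zero]

lemma vanI_prime (k : Type u) [Field k] (V : Type v) [AddCommGroup V] [Module k V] [FiniteDimensional k V]
    (Z : Set V) (hZ : @IsIrreducible V (CV.zar k V) Z) : (vanI k V Z).IsPrime := by
  let _ := CV.zar k V
  refine ⟨?_, ?_⟩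
  · intro h
    obtain ⟨z, hz⟩ := hZ.1
    have : (1 : MvPolynomial (Module.Free.ChooseBasisIndex k V) k) ∈ vanI k V Z := by rw [h]; trivial
    simpa [CV.evalP] using this z hz
  · intro F G hFG
    have := isPreirreducible_iff_isClosed_union_isClosed.1 hZ.2 _ _ (zar_isClosed k V F) (zar_isClosed k V G)
      (fun z hz => by
        have := hFG z hz
        simp only [CV.evalP, map_mul, mul_eq_zero] at this
        exact this)
    exact this.imp (fun h z hz => h hz) (fun h z hz => h hz)

lemma der_kill {k L ι : Type*} [Field k] [Field L] [Algebra k L] (E : Derivation k L L) (ξ : ι → L)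
    (h : ∀ j, E (ξ j) = 0) (F : MvPolynomial ι k) : E (MvPolynomial.aeval ξ F) = 0 := by
  induction F using MvPolynomial.induction_on with
  | C a => rw [MvPolynomial.aeval_C, Derivation.map_algebraMap]
  | add p q hp hq => rw [map_add, map_add, hp, hq, add_zero]
  | mul_X p i hp => rw [map_mul, Derivation.leibniz, hp, MvPolynomial.aeval_X, h, smul_zero, smul_zero, add_zero]

lemma der_sum {k L : Type*} [Field k] [Field L] [Algebra k L] {s : ℕ} (c : Fin s → L)
    (D : Fin s → Derivation k L L) (x : L) : (∑ i, c i • D i) x = ∑ i, c i * D i x := by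
  classical
  have : ∀ T : Finset (Fin s), (∑ i ∈ T, c i • D i) x = ∑ i ∈ T, c i * D i x := by
    intro T
    induction T using Finset.induction_on with
    | empty => simp
    | insert a T ha ih => rw [Finset.sum_insert ha, Finset.sum_insert ha, Derivation.add_apply, ih]; rfl
  exact this _

theorem dim_le (k : Type u) [Field k] [CharZero k] (V : Type v) [AddCommGroup V] [Module k V]
    [FiniteDimensional k V] (S : Set V) (N : ℕ)
    (H : ∀ (L : Type (max v u)) [Field L] [Algebra k L] [IsAlgClosed L]
      (ξ : Module.Free.ChooseBasisIndex k V → L),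
      (∀ F, (∀ z ∈ S, CV.evalP k V F z = 0) → MvPolynomial.aeval ξ F = 0) →
      ∀ (s : ℕ) (D : Fin s → Derivation k L L), LinearIndependent L (fun i j => D i (ξ j)) → s ≤ N) :
    CV.dimSet k V S ≤ (N : ℕ∞) := by
  let τ := CV.zar k V
  change Order.krullDim (TopologicalSpace.IrreducibleCloseds S) ≤ _
  refine iSup_le fun p => ?_
  let R := MvPolynomial (Module.Free.ChooseBasisIndex k V) k
  let I : TopologicalSpace.IrreducibleCloseds S → Ideal R := fun Z => vanI k V (Subtype.val '' (Z : Set S))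
  have hI : ∀ Z, (I Z).IsPrime := fun Z => vanI_prime k V _
    (Z.isIrreducible.image _ continuous_subtype_val.continuousOn)
  have hmono : ∀ Z Z', Z < Z' → I Z' < I Z := by
    intro Z Z' h
    have hle : (Z : Set S) ⊆ Z' := h.le
    refine lt_of_le_not_ge (fun F hF z hz => hF z (Set.image_mono hle hz)) ?_
    intro hge
    obtain ⟨z, hz', hz⟩ := Set.not_subset.1 (show ¬ (Z' : Set S) ⊆ Z from fun h' => h.not_ge h')
    obtain ⟨C, hC, hCZ⟩ := isClosed_induced_iff.1 Z.isClosed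
    have hzC : z.1 ∉ C := fun h' => hz (by rw [← hCZ]; exact h')
    obtain ⟨F, hF1, hF2⟩ := zar_sep k V hC hzC
    refine hF2 (hge (x := F) ?_ z.1 ⟨z, hz', rfl⟩)
    rintro _ ⟨w, hw, rfl⟩
    apply hF1
    rw [← hCZ] at hw; exact hw
  let P := I p.last
  have hP : P.IsPrime := hI _
  let A := R ⧸ P
  let L := AlgebraicClosure (FractionRing A)
  have : Algebra.IsAlgebraic A (FractionRing A) := IsLocalization.isAlgebraic _ (nonZeroDivisors A)
  have : Algebra.IsAlgebraic A L := Algebra.IsAlgebraic.trans A (FractionRing A) L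
  have : FaithfulSMul A L := by
    refine (faithfulSMul_iff_algebraMap_injective A L).2 ?_
    rw [IsScalarTower.algebraMap_eq A (FractionRing A) L]
    exact (algebraMap (FractionRing A) L).injective.comp (IsFractionRing.injective A (FractionRing A))
  have hA : ringKrullDim A ≤ N := by
    refine alg_bound k A L N ?_
    intro s D hD
    have hξ : ∀ F : R, MvPolynomial.aeval (fun j => algebraMap A L (Ideal.Quotient.mk P (MvPolynomial.X j))) F
        = algebraMap A L (Ideal.Quotient.mk P F) := by
      intro F
      induction F using MvPolynomial.induction_on with
      | C a =>
        rw [MvPolynomial.aeval_C, IsScalarTower.algebraMap_apply k A L]; rfl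
      | add p q hp hq => simp only [map_add, hp, hq]
      | mul_X p i hp => simp only [map_mul, hp, MvPolynomial.aeval_X]
    refine H L (fun j => algebraMap A L (Ideal.Quotient.mk P (MvPolynomial.X j))) ?_ s D ?_
    · intro F hF
      rw [hξ, Ideal.Quotient.eq_zero_iff_mem.2, map_zero]
      rintro _ ⟨w, hw, rfl⟩
      exact hF _ w.2
    · rw [Fintype.linearIndependent_iff]
      intro c hc
      have := hD c ?_
      · intro i; rw [this]; rfl
      · intro a
        obtain ⟨F, rfl⟩ := Ideal.Quotient.mk_surjective a
        have h1 := der_kill (∑ i, c i • D i) (fun j => algebraMap A L (Ideal.Quotient.mk P (MvPolynomial.X j))) ?_ F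
        · rw [hξ] at h1
          rw [← h1]
          rw [der_sum]
        · intro j
          have := congrFun hc j
          rw [der_sum]
          simpa [Finset.sum_apply] using this
  have hlen : (p.length : WithBot ℕ∞) ≤ ringKrullDim A := by
    rw [ringKrullDim_quotient]
    let q : LTSeries (PrimeSpectrum.zeroLocus (P : Set R)) :=
      { length := p.length
        toFun := fun i => ⟨⟨I (p (Fin.rev i)), hI _⟩, by
          change P ≤ I _
          rcases (LTSeries.monotone p (Fin.le_last (Fin.rev i))).eq_or_lt with h | h
          · exact le_of_eq (congrArg I h).symm
          · exact (hmono _ _ h).le⟩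
        step := by
          intro i
          apply hmono
          apply LTSeries.strictMono p
          rw [Fin.rev_lt_rev]
          exact Fin.castSucc_lt_succ }
    exact Order.LTSeries.length_le_krullDim q
  exact hlen.trans hA

end partE2
end CVP

namespace CVP
open TensorProduct
set_option linter.unusedSectionVars false
section partE3
open Module
universe u v

lemma evalP_comm {k : Type u} [Field k] {g : Type v} [LieRing g] [LieAlgebra k g] [FiniteDimensional k g]
    {L : Type*} [Field L] [Algebra k L] (ξ : Module.Free.ChooseBasisIndex k (g × g) → L)
    (hξ : ∀ F, (∀ z ∈ commSet k g, CV.evalP k (g × g) F z = 0) → MvPolynomial.aeval ξ F = 0) :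
    ⁅(∑ j, ξ j ⊗ₜ[k] (Module.Free.chooseBasis k (g × g) j).1 : L ⊗[k] g),
      (∑ j, ξ j ⊗ₜ[k] (Module.Free.chooseBasis k (g × g) j).2 : L ⊗[k] g)⁆ = 0 := by
  set b := Module.Free.chooseBasis k (g × g) with hb
  set c := Module.Free.chooseBasis k g with hc
  let B := Algebra.TensorProduct.basis L c
  apply B.repr.injective
  ext m
  have h := hξ (∑ i, ∑ j, MvPolynomial.X i * MvPolynomial.X j * MvPolynomial.C (c.repr ⁅(b i).1, (b j).2⁆ m)) ?_
  · rw [map_zero, Finsupp.zero_apply, ← h]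
    simp only [_root_.sum_lie, _root_.lie_sum, LieAlgebra.ExtendScalars.bracket_tmul, map_sum, Finsupp.coe_finsetSum, Finset.sum_apply, map_mul, MvPolynomial.aeval_X, MvPolynomial.aeval_C, B]
    rw [Finset.sum_comm]
    refine Finset.sum_congr rfl fun i _ => Finset.sum_congr rfl fun j _ => ?_
    rw [Algebra.TensorProduct.basis_repr_tmul]
    simp
  · intro z hz
    have hz' : ⁅z.1, z.2⁆ = 0 := hz
    have e1 : z.1 = ∑ i, b.repr z i • (b i).1 := by
      have := congrArg Prod.fst (b.sum_repr z)
      rw [Prod.fst_sum] at this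
      exact this.symm
    have e2 : z.2 = ∑ i, b.repr z i • (b i).2 := by
      have := congrArg Prod.snd (b.sum_repr z)
      rw [Prod.snd_sum] at this
      exact this.symm
    have e3 : c.repr ⁅z.1, z.2⁆ m = 0 := by rw [hz']; simp
    rw [e1, e2] at e3
    simp only [_root_.sum_lie, _root_.lie_sum, smul_lie, lie_smul, map_sum, map_smul, Finsupp.coe_finsetSum, Finset.sum_apply,
      Finsupp.smul_apply, smul_eq_mul, Finset.mul_sum] at e3
    rw [evalP_eq, ← e3]
    simp only [map_sum, map_mul, MvPolynomial.aeval_X, MvPolynomial.aeval_C, Algebra.algebraMap_self, RingHom.id_apply]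
    rw [Finset.sum_comm]
    refine Finset.sum_congr rfl fun i _ => Finset.sum_congr rfl fun j _ => ?_
    rw [← hb]; ring

theorem dim_comm_le (k : Type u) [Field k] [CharZero k] (g : Type v) [LieRing g] [LieAlgebra k g]
    [FiniteDimensional k g] (hred : LieAlgebra.radical k g = LieAlgebra.center k g) :
    CV.dimSet k (g × g) (commSet k g) ≤ ((finrank k g + LieAlgebra.rank k g : ℕ) : ℕ∞) := by
  refine dim_le k (g × g) _ _ ?_
  intro L _ _ _ ξ hξ s D hD
  have hn : ∀ (E : Derivation k L L) (f : Module.Free.ChooseBasisIndex k (g × g) → g),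
      nab g E (∑ j, ξ j ⊗ₜ[k] f j) = ∑ j, E (ξ j) ⊗ₜ[k] f j := by
    intro E f
    rw [map_sum]
    exact Finset.sum_congr rfl fun j _ => nab_tmul E _ _
  refine main_bound hred _ _ (evalP_comm ξ hξ) D ?_
  rw [Fintype.linearIndependent_iff] at hD ⊢
  intro a ha
  apply hD a
  set b := Module.Free.chooseBasis k (g × g) with hb
  simp only [hn] at ha
  have h1 : ∀ f : Module.Free.ChooseBasisIndex k (g × g) → g, ∑ i, a i • ∑ j, D i (ξ j) ⊗ₜ[k] f j
     = ∑ j, (∑ i, a i * D i (ξ j)) ⊗ₜ[k] f j := by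
    intro f
    simp only [Finset.smul_sum, TensorProduct.smul_tmul', smul_eq_mul, TensorProduct.sum_tmul]
    exact Finset.sum_comm
  have ha1 := congrArg Prod.fst ha
  have ha2 := congrArg Prod.snd ha
  simp only [Prod.fst_sum, Prod.snd_sum, Prod.smul_fst, Prod.smul_snd, h1, Prod.fst_zero, Prod.snd_zero] at ha1 ha2
  have e1 := congrArg (LinearMap.lTensor L (LinearMap.inl k g g)) ha1
  have e2 := congrArg (LinearMap.lTensor L (LinearMap.inr k g g)) ha2
  simp only [map_sum, map_zero, LinearMap.lTensor_tmul] at e1 e2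
  have e3 := congrArg₂ (· + ·) e1 e2
  simp only [← Finset.sum_add_distrib, ← TensorProduct.tmul_add, LinearMap.inl_apply, LinearMap.inr_apply,
    Prod.mk_add_mk, add_zero, zero_add, Prod.mk.eta] at e3
  have hli := Fintype.linearIndependent_iff.1 (Algebra.TensorProduct.basis L b).linearIndependent
    (fun j => ∑ i, a i * D i (ξ j)) (by
      rw [← e3]
      refine Finset.sum_congr rfl fun j _ => ?_
      rw [Algebra.TensorProduct.basis_apply, TensorProduct.smul_tmul', smul_eq_mul, mul_one])
  ext j
  simpa [Finset.sum_apply] using hli j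

end partE3
end CVP

namespace CVP
open TensorProduct
set_option linter.unusedSectionVars false
section partF
open Module
universe u v w

/-- Polynomial functions. -/
def IsPoly (k : Type u) [Field k] (V : Type v) [AddCommGroup V] [Module k V] [FiniteDimensional k V]
    (f : V → k) : Prop := ∃ F, ∀ z, CV.evalP k V F z = f z

section
variable {k : Type u} [Field k] {V : Type v} [AddCommGroup V] [Module k V] [FiniteDimensional k V]
  {W : Type w} [AddCommGroup W] [Module k W] [FiniteDimensional k W]

lemma IsPoly.add {f f' : V → k} (h : IsPoly k V f) (h' : IsPoly k V f') : IsPoly k V (fun z => f z + f' z) := by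
  obtain ⟨F, hF⟩ := h
  obtain ⟨F', hF'⟩ := h'
  refine ⟨F + F', fun z => ?_⟩
  beta_reduce; rw [← hF, ← hF', CV.evalP, map_add]; rfl

lemma IsPoly.mul {f f' : V → k} (h : IsPoly k V f) (h' : IsPoly k V f') : IsPoly k V (fun z => f z * f' z) := by
  obtain ⟨F, hF⟩ := h
  obtain ⟨F', hF'⟩ := h'
  refine ⟨F * F', fun z => ?_⟩
  beta_reduce; rw [← hF, ← hF', CV.evalP, map_mul]; rfl

lemma IsPoly.const (c : k) : IsPoly k V (fun _ => c) :=
  ⟨MvPolynomial.C c, fun z => by rw [CV.evalP, MvPolynomial.aeval_C]; rfl⟩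

lemma IsPoly.sum {ι : Type*} (s : Finset ι) {f : ι → V → k} (h : ∀ i ∈ s, IsPoly k V (f i)) :
    IsPoly k V (fun z => ∑ i ∈ s, f i z) := by
  classical
  induction s using Finset.induction_on with
  | empty => simpa using IsPoly.const (V := V) (0 : k)
  | insert a s ha ih =>
    simp only [Finset.sum_insert ha]
    exact (h a (by simp)).add (ih fun i hi => h i (by simp [hi]))

lemma IsPoly.linear (l : V →ₗ[k] k) : IsPoly k V l := by
  refine ⟨∑ i, MvPolynomial.C (l (Module.Free.chooseBasis k V i)) * MvPolynomial.X i, fun z => ?_⟩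
  conv_rhs => rw [← (Module.Free.chooseBasis k V).sum_repr z]
  simp only [CV.evalP, map_sum, map_mul, map_smul, MvPolynomial.aeval_C, MvPolynomial.aeval_X, smul_eq_mul]
  exact Finset.sum_congr rfl fun i _ => mul_comm _ _

/-- Polynomial maps. -/
def PolyMap (k : Type u) [Field k] {V : Type v} [AddCommGroup V] [Module k V] [FiniteDimensional k V]
    {W : Type w} [AddCommGroup W] [Module k W] [FiniteDimensional k W] (φ : V → W) : Prop :=
  ∀ l : W →ₗ[k] k, IsPoly k V (fun z => l (φ z))

lemma PolyMap.comp {φ : V → W} (h : PolyMap k φ) {f : W → k} (hf : IsPoly k W f) :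
    IsPoly k V (fun z => f (φ z)) := by
  obtain ⟨F, hF⟩ := hf
  simp only [← hF]
  clear hF
  induction F using MvPolynomial.induction_on with
  | C a => simpa [CV.evalP] using IsPoly.const (V := V) a
  | add p q hp hq => simpa [CV.evalP] using hp.add hq
  | mul_X p i hp =>
    simpa [CV.evalP, CV.coordFn] using hp.mul (h ((Module.Free.chooseBasis k W).coord i))

lemma PolyMap.continuous {φ : V → W} (h : PolyMap k φ) : @Continuous V W (CV.zar k V) (CV.zar k W) φ := by
  let _ := CV.zar k V
  refine continuous_generateFrom_iff.2 ?_
  rintro _ ⟨F, rfl⟩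
  obtain ⟨G, hG⟩ := h.comp (f := CV.evalP k W F) ⟨F, fun _ => rfl⟩
  refine (zar_basis k V).isOpen ⟨G, ?_⟩
  ext z
  simp [hG]

lemma isPoly_eq_zero [Infinite k] {f h : V → k} (hf : IsPoly k V f) (hh : IsPoly k V h)
    (hz : ∀ z, f z * h z = 0) {z₀ : V} (h0 : h z₀ ≠ 0) (z : V) : f z = 0 := by
  obtain ⟨F, hF⟩ := hf
  obtain ⟨H, hH⟩ := hh
  have : F * H = 0 := by
    apply MvPolynomial.funext
    intro x
    have := hz ((Module.Free.chooseBasis k V).equivFun.symm x)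
    rw [← hF, ← hH, CV.evalP, CV.evalP, ← map_mul] at this
    rw [map_zero, ← this, ← MvPolynomial.coe_aeval_eq_eval]
    have e : CV.coordFn k V ((Module.Free.chooseBasis k V).equivFun.symm x) = x := by
      ext i
      exact congrFun ((Module.Free.chooseBasis k V).equivFun.apply_symm_apply x) i
    rw [e]; rfl
  rcases mul_eq_zero.1 this with h | h
  · rw [← hF, h]; simp [CV.evalP]
  · exact absurd (by rw [← hH, h]; simp [CV.evalP]) h0

lemma zar_irr (k : Type u) [Field k] [Infinite k] (V : Type v) [AddCommGroup V] [Module k V] [FiniteDimensional k V] :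
    @IsIrreducible V (CV.zar k V) Set.univ := by
  let _ := CV.zar k V
  refine ⟨⟨0, trivial⟩, ?_⟩
  rintro U U' hU hU' ⟨x, -, hx⟩ ⟨x', -, hx'⟩
  obtain ⟨_, ⟨F, rfl⟩, h1, h2⟩ := (zar_basis k V).exists_subset_of_mem_open hx hU
  obtain ⟨_, ⟨F', rfl⟩, h1', h2'⟩ := (zar_basis k V).exists_subset_of_mem_open hx' hU'
  by_contra hcon
  refine h1 (isPoly_eq_zero (f := CV.evalP k V F) (h := CV.evalP k V F') ⟨F, fun _ => rfl⟩ ⟨F', fun _ => rfl⟩ ?_ h1' x)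
  intro z
  by_contra hz
  exact hcon ⟨z, trivial, h2 (left_ne_zero_of_mul hz), h2' (right_ne_zero_of_mul hz)⟩

lemma exists_flag (k : Type u) [Field k] (V : Type v) [AddCommGroup V] [Module k V] [FiniteDimensional k V]
    (W : Submodule k V) :
    ∃ M : ℕ → Submodule k V, Monotone M ∧ M 0 = ⊥ ∧ (∀ i, M i ≤ W) ∧
      ∀ i < finrank k W, ∃ x ∈ M (i + 1), x ∉ M i := by
  let b := finBasis k W
  refine ⟨fun i => (b.flag ⟨min i (finrank k W), by omega⟩).map W.subtype, ?_, ?_, ?_, ?_⟩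
  · intro i j hij
    apply Submodule.map_mono
    apply b.flag_mono
    simp only [Fin.mk_le_mk]; omega
  · have : (⟨min 0 (finrank k W), by omega⟩ : Fin (finrank k W + 1)) = 0 := by ext; simp
    simp only [this, Basis.flag_zero, Submodule.map_bot]
  · intro i
    exact Submodule.map_subtype_le _ _
  · intro i hi
    have : b.flag ⟨min i (finrank k W), by omega⟩ < b.flag ⟨min (i+1) (finrank k W), by omega⟩ := by
      apply b.flag_strictMono
      simp only [Fin.mk_lt_mk]; omega
    obtain ⟨x, hx, hx'⟩ := SetLike.exists_of_lt this
    refine ⟨x, ⟨x, hx, rfl⟩, ?_⟩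
    rintro ⟨y, hy, hyx⟩
    have : y = x := W.subtype_injective hyx
    exact hx' (this ▸ hy)

end
end partF
end CVP

namespace CVP
open TensorProduct
set_option linter.unusedSectionVars false
section partG
open Module LieAlgebra
universe u v
variable {k : Type u} [Field k] [CharZero k] {g : Type v} [LieRing g] [LieAlgebra k g] [FiniteDimensional k g]

lemma isPoly_coeff (i : ℕ) : IsPoly k g (fun y => (ad k g y).charpoly.coeff i) := by
  classical
  refine ⟨((ad k g : g →ₗ[k] Module.End k g).polyCharpoly (Module.Free.chooseBasis k g)).coeff i, fun y => ?_⟩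
  have := LinearMap.polyCharpoly_coeff_eval (ad k g : g →ₗ[k] Module.End k g) (Module.Free.chooseBasis k g) y i
  beta_reduce
  refine Eq.trans ?_ this
  rw [CV.evalP, ← MvPolynomial.coe_aeval_eq_eval]
  rfl

/-- The map `w ↦ q_y(ad y) w`. -/
noncomputable def Q (k : Type u) [Field k] {g : Type v} [LieRing g] [LieAlgebra k g] [FiniteDimensional k g]
    (y w : g) : g :=
  ∑ i ∈ Finset.range (finrank k g + 1),
    (ad k g y).charpoly.coeff (i + LieAlgebra.rank k g) • ((ad k g y) ^ i) w

lemma polyMap_lie {φ ψ : g × g → g} (hφ : PolyMap k φ) (hψ : PolyMap k ψ) : PolyMap k (fun p => ⁅φ p, ψ p⁆) := by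
  intro l
  let b := Module.Free.chooseBasis k g
  have : (fun p => l ⁅φ p, ψ p⁆) = fun p => ∑ i, ∑ j, (b.coord i (φ p) * b.coord j (ψ p)) * l ⁅b i, b j⁆ := by
    ext p
    conv_lhs => rw [← b.sum_repr (φ p), ← b.sum_repr (ψ p)]
    simp only [_root_.sum_lie, _root_.lie_sum, smul_lie, lie_smul, map_sum, map_smul, smul_eq_mul, Finset.mul_sum]
    rw [Finset.sum_comm]
    refine Finset.sum_congr rfl fun i _ => Finset.sum_congr rfl fun j _ => ?_
    simp only [Basis.coord_apply]
    ring
  rw [this]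
  exact IsPoly.sum _ fun i _ => IsPoly.sum _ fun j _ => ((hφ _).mul (hψ _)).mul (IsPoly.const _)

lemma polyMap_fst : PolyMap k (Prod.fst : g × g → g) := fun l => IsPoly.linear (l ∘ₗ LinearMap.fst k g g)
lemma polyMap_snd : PolyMap k (Prod.snd : g × g → g) := fun l => IsPoly.linear (l ∘ₗ LinearMap.snd k g g)

lemma polyMap_Q : PolyMap k (fun p : g × g => Q k p.1 p.2) := by
  have hp : ∀ i, PolyMap k (fun p : g × g => ((ad k g p.1) ^ i) p.2) := by
    intro i
    induction i with
    | zero => simpa using polyMap_snd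
    | succ i ih =>
      simp only [pow_succ', Module.End.mul_apply, ad_apply]
      exact polyMap_lie polyMap_fst ih
  intro l
  simp only [Q, map_sum, map_smul, smul_eq_mul]
  exact IsPoly.sum _ fun i _ => (polyMap_fst.comp (isPoly_coeff _)).mul (hp i l)

lemma Q_engel (y w : g) : Q k y w ∈ LieSubalgebra.engel k y := by
  rw [LieSubalgebra.mem_engel_iff]
  refine ⟨LieAlgebra.rank k g, ?_⟩
  have h := LinearMap.congr_fun (LinearMap.aeval_self_charpoly (ad k g y)) w
  rw [Polynomial.aeval_eq_sum_range' (n := finrank k g + 1 + LieAlgebra.rank k g)] at h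
  · rw [Finset.range_eq_Ico, ← Finset.sum_Ico_consecutive _ (Nat.zero_le (LieAlgebra.rank k g)) (by omega)] at h
    have h0 : ∑ i ∈ Finset.Ico 0 (LieAlgebra.rank k g), (ad k g y).charpoly.coeff i • (ad k g y) ^ i = 0 := by
      refine Finset.sum_eq_zero fun i hi => ?_
      rw [Polynomial.coeff_eq_zero_of_lt_natTrailingDegree, zero_smul]
      exact lt_of_lt_of_le (Finset.mem_Ico.1 hi).2 (rank_le_natTrailingDegree_charpoly_ad k y)
    rw [h0, zero_add, Finset.sum_Ico_eq_sum_range] at h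
    simp only [Q, map_sum, map_smul]
    rw [LinearMap.zero_apply, LinearMap.sum_apply] at h
    rw [← h]
    have : finrank k g + 1 + LieAlgebra.rank k g - LieAlgebra.rank k g = finrank k g + 1 := by omega
    rw [this]
    refine Finset.sum_congr rfl fun i _ => ?_
    rw [LinearMap.smul_apply, pow_add, Module.End.mul_apply, add_comm i]
  · rw [LinearMap.charpoly_natDegree]; omega

lemma Q_comm (hred : LieAlgebra.radical k g = LieAlgebra.center k g) (y w : g) : ⁅y, Q k y w⁆ = 0 := by
  obtain ⟨y₀, hy₀⟩ := exists_isRegular k g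
  rw [← forall_dual_apply_eq_zero_iff k]
  intro l
  refine isPoly_eq_zero (V := g × g) (f := fun p => l ⁅p.1, Q k p.1 p.2⁆)
    (h := fun p => (ad k g p.1).charpoly.coeff (LieAlgebra.rank k g))
    (polyMap_lie polyMap_fst polyMap_Q l) (polyMap_fst.comp (isPoly_coeff _)) ?_ (z₀ := (y₀, 0)) hy₀ (y, w)
  intro p
  by_cases hp : IsRegular k p.1
  · have := (engel_eq_cent hred hp _).1 (Q_engel p.1 p.2)
    beta_reduce
    rw [this, map_zero, zero_mul]
  · have : (ad k g p.1).charpoly.coeff (LieAlgebra.rank k g) = 0 := by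
      by_contra h; exact hp h
    beta_reduce
    rw [this, mul_zero]

lemma Q_of_comm {y w : g} (h : ⁅y, w⁆ = 0) : Q k y w = (ad k g y).charpoly.coeff (LieAlgebra.rank k g) • w := by
  rw [Q, Finset.sum_range_succ']
  rw [Finset.sum_eq_zero, zero_add]
  · simp
  · intro i _
    rw [pow_succ, Module.End.mul_apply, ad_apply, h, map_zero, smul_zero]

/-- The open dense part. -/
theorem part_two (hred : LieAlgebra.radical k g = LieAlgebra.center k g) :
    ∃ U : Set g, @IsOpen g (CV.zar k g) U ∧ @Dense g (CV.zar k g) U ∧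
        ∀ y ∈ U, ∃ t' : LieSubalgebra k g, t'.IsCartanSubalgebra ∧
          Module.finrank k ↥t' = LieAlgebra.rank k g ∧
          {p ∈ commSet k g | p.1 = y} = {y} ×ˢ (t' : Set g) := by
  let _ := CV.zar k g
  obtain ⟨y₀, hy₀⟩ := exists_isRegular k g
  obtain ⟨P, hP⟩ := isPoly_coeff (k := k) (g := g) (LieAlgebra.rank k g)
  have hU : IsOpen {y : g | IsRegular k y} := by
    refine (zar_basis k g).isOpen ⟨P, ?_⟩
    ext y
    simp only [hP, Set.mem_setOf_eq]
    exact Iff.rfl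
  refine ⟨{y | IsRegular k y}, hU, ?_, ?_⟩
  · rw [dense_iff_inter_open]
    intro V hV ⟨x, hx⟩
    obtain ⟨z, -, hz⟩ := (zar_irr k g).2 V _ hV hU ⟨x, trivial, hx⟩ ⟨y₀, trivial, hy₀⟩
    exact ⟨z, hz⟩
  · intro y hy
    have hy' : IsRegular k y := hy
    have hc := isCartan_engel_of_regular (K := k) hy'
    refine ⟨LieSubalgebra.engel k y, hc, finrank_cartan _, ?_⟩
    ext ⟨a, b⟩
    simp only [Set.mem_setOf_eq, Set.mem_prod, Set.mem_singleton_iff, SetLike.mem_coe, commSet]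
    constructor
    · rintro ⟨h, rfl⟩
      exact ⟨rfl, (engel_eq_cent hred hy' b).2 h⟩
    · rintro ⟨rfl, h⟩
      exact ⟨(engel_eq_cent hred hy' b).1 h, rfl⟩

end partG
end CVP

namespace CVP
open TensorProduct
set_option linter.unusedSectionVars false
section partH
open Module LieAlgebra
universe u v
variable {k : Type u} [Field k] [CharZero k] {g : Type v} [LieRing g] [LieAlgebra k g] [FiniteDimensional k g]

theorem le_dim_comm (hred : LieAlgebra.radical k g = LieAlgebra.center k g) :
    (((finrank k g + LieAlgebra.rank k g : ℕ) : ℕ∞) : WithBot ℕ∞) ≤ CV.dimSet k (g × g) (commSet k g) := by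
  let τ := CV.zar k (g × g)
  obtain ⟨y₀, hy₀⟩ := exists_isRegular k g
  set a := (ad k g y₀).charpoly.coeff (LieAlgebra.rank k g) with ha
  have ha0 : a ≠ 0 := hy₀
  let W := (LieSubalgebra.engel k y₀).toSubmodule
  have hW : finrank k W = LieAlgebra.rank k g := (isRegular_iff_finrank_engel_eq_rank k y₀).1 hy₀
  obtain ⟨N, hNm, hN0, hNW, hNs⟩ := exists_flag k g W
  obtain ⟨M, hMm, hM0, -, hMs⟩ := exists_flag k g (⊤ : Submodule k g)
  rw [hW] at hNs
  rw [finrank_top] at hMs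
  -- the maps
  let φ : ∀ i : ℕ, (M (i - LieAlgebra.rank k g)) × (N i) → commSet k g := fun i p =>
    ⟨(y₀ + p.1, Q k (y₀ + p.1) p.2), Q_comm hred _ _⟩
  have hφ : ∀ i, @Continuous _ _ (CV.zar k _) _ (φ i) := by
    intro i
    let _ := CV.zar k ((M (i - LieAlgebra.rank k g)) × (N i))
    refine Continuous.subtype_mk ?_ _
    let ψ : (M (i - LieAlgebra.rank k g)) × (N i) → g × g := fun p => (y₀ + p.1, p.2)
    have h1 : PolyMap k ψ := by
      intro l
      have : (fun p => l (ψ p)) = fun p => l (y₀, 0) +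
          (l ∘ₗ LinearMap.prodMap (Submodule.subtype _) (Submodule.subtype _)) p := by
        ext p
        simp only [LinearMap.comp_apply, ← map_add]
        congr 1
        simp [ψ]
      rw [this]
      exact (IsPoly.const _).add (IsPoly.linear _)
    have h2 : PolyMap k (fun p : g × g => (p.1, Q k p.1 p.2)) := by
      intro l
      have : (fun p : g × g => l (p.1, Q k p.1 p.2)) = fun p => (l ∘ₗ LinearMap.inl k g g) p.1 +
         (l ∘ₗ LinearMap.inr k g g) (Q k p.1 p.2) := by
        ext p
        simp only [LinearMap.comp_apply, ← map_add]
        simp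
      rw [this]
      exact (polyMap_fst _).add (polyMap_Q _)
    exact h2.continuous.comp h1.continuous
  let T : ℕ → TopologicalSpace.IrreducibleCloseds (commSet k g) := fun i =>
    { carrier := closure (Set.range (φ i))
      isIrreducible' := by
        apply IsIrreducible.closure
        rw [← Set.image_univ]
        let _ := CV.zar k ((M (i - LieAlgebra.rank k g)) × (N i))
        exact (zar_irr k _).image _ (hφ i).continuousOn
      isClosed' := isClosed_closure }
  -- closed sets
  have hcl : ∀ (f : g × g → k), IsPoly k (g × g) f → ∀ i, (∀ p, f (φ i p).1 = 0) →
      ∀ z ∈ T i, f z.1 = 0 := by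
    rintro f ⟨F, hF⟩ i hi z hz
    have hc : IsClosed {z : commSet k g | CV.evalP k (g × g) F z.1 = 0} :=
      (zar_isClosed k (g × g) F).preimage continuous_subtype_val
    have hz' : z ∈ closure (Set.range (φ i)) := hz
    have := closure_minimal (s := Set.range (φ i)) (by
      rintro _ ⟨p, rfl⟩
      change CV.evalP k (g × g) F _ = 0
      rw [hF]; exact hi p) hc hz'
    rw [← hF]; exact this
  have hlt : ∀ i < finrank k g + LieAlgebra.rank k g, T i < T (i + 1) := by
    intro i hi
    have hle : T i ≤ T (i + 1) := by
      apply closure_mono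
      rintro _ ⟨p, rfl⟩
      exact ⟨(⟨p.1, hMm (by omega) p.1.2⟩, ⟨p.2, hNm (by omega) p.2.2⟩), rfl⟩
    refine lt_of_le_of_ne hle fun heq => ?_
    rcases lt_or_ge i (LieAlgebra.rank k g) with h | h
    · obtain ⟨x, hx, hx'⟩ := hNs i h
      obtain ⟨l, hl, hlN⟩ := Submodule.exists_le_ker_of_notMem hx'
      have hz : φ (i + 1) (0, ⟨x, hx⟩) ∈ T i := by
        rw [heq]; exact subset_closure ⟨_, rfl⟩
      have hcent : ∀ w ∈ W, Q k y₀ w = a • w := fun w hw =>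
        Q_of_comm ((engel_eq_cent hred hy₀ w).1 hw)
      have := hcl (fun p => l p.2) (polyMap_snd l) i (by
        rintro ⟨⟨m, hm⟩, ⟨w, hw⟩⟩
        have hm0 : m = 0 := by
          have : i - LieAlgebra.rank k g = 0 := by omega
          rw [this, hM0] at hm
          simpa using hm
        subst hm0
        simp only [φ, add_zero]
        rw [hcent w (hNW _ hw), map_smul]
        have : l w = 0 := hlN hw
        rw [this, smul_zero]) _ hz
      simp only [φ, Prod.fst_zero, ZeroMemClass.coe_zero, add_zero] at this
      rw [hcent x (hNW _ hx), map_smul, smul_eq_mul] at this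
      exact (mul_ne_zero ha0 hl) this
    · obtain ⟨x, hx, hx'⟩ := hMs (i - LieAlgebra.rank k g) (by omega)
      obtain ⟨l, hl, hlN⟩ := Submodule.exists_le_ker_of_notMem hx'
      have hxm : x ∈ M (i + 1 - LieAlgebra.rank k g) := by
        have : i + 1 - LieAlgebra.rank k g = i - LieAlgebra.rank k g + 1 := by omega
        rw [this]; exact hx
      have hz : φ (i + 1) (⟨x, hxm⟩, 0) ∈ T i := by
        rw [heq]; exact subset_closure ⟨_, rfl⟩
      have := hcl (fun p => l p.1 + - l y₀) ((polyMap_fst l).add (IsPoly.const _)) i (by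
        rintro ⟨⟨m, hm⟩, w⟩
        have : l m = 0 := hlN hm
        simp [φ, this]) _ hz
      simp [φ] at this
      exact hl this
  change _ ≤ Order.krullDim (TopologicalSpace.IrreducibleCloseds (commSet k g))
  let q : LTSeries (TopologicalSpace.IrreducibleCloseds (commSet k g)) :=
    { length := finrank k g + LieAlgebra.rank k g
      toFun := fun i => T i
      step := fun i => hlt i i.2 }
  exact Order.LTSeries.length_le_krullDim q

end partH
end CVP

variable (k : Type*) [Field k] [IsAlgClosed k] [CharZero k]
variable (g : Type*) [LieRing g] [LieAlgebra k g] [FiniteDimensional k g]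

/-- The commuting variety `C` has dimension `dim g + rk g`.  Moreover, for
all `y` in a Zariski-dense open subset of `g`, the fiber of the first projection
`π₁ : C → g` over `y` is `{y} × t'` for a Cartan subalgebra `t'` of `g` (a linear — in
particular affine — subspace of dimension `rk g`). -/
theorem dim_commuting_variety
    (hred : LieAlgebra.radical k g = LieAlgebra.center k g) (hnc : ¬IsLieAbelian g)
    (t : LieSubalgebra k g) (ht : t.IsCartanSubalgebra) :
    CV.dimSet k (g × g) (commSet k g)
        = (((Module.finrank k g + Module.finrank k ↥t : ℕ) : ℕ∞) : WithBot ℕ∞) ∧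
      ∃ U : Set g, @IsOpen g (CV.zar k g) U ∧ @Dense g (CV.zar k g) U ∧
        ∀ y ∈ U, ∃ t' : LieSubalgebra k g, t'.IsCartanSubalgebra ∧
          Module.finrank k ↥t' = Module.finrank k ↥t ∧
          {p ∈ commSet k g | p.1 = y} = {y} ×ˢ (t' : Set g) := by
  have htr : Module.finrank k ↥t = LieAlgebra.rank k g := CVP.finrank_cartan t
  rw [htr]
  exact ⟨le_antisymm (CVP.dim_comm_le k g hred) (CVP.le_dim_comm hred), CVP.part_two hred⟩
end
end

section
/- Let m = sl_{n₁} ⊕ … ⊕ sl_{n_q} be a finite direct sum of special linear Lie algebras over k, and let x ∈ m be a nilpotent element. Then there exists a semisimple element h ∈ m commuting with x such that x is a regular element of the centralizer m_h, i.e. the centralizer of x inside m_h has dimension equal to rk m = (n₁ − 1) + … + (n_q − 1). -/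
noncomputable section

/-- Componentwise Lie ring structure on a product of Lie rings. -/
instance Pi.lieRing {ι : Type*} (L : ι → Type*) [∀ i, LieRing (L i)] :
    LieRing (∀ i, L i) where
  bracket x y := fun i => ⁅x i, y i⁆
  add_lie x y z := funext fun i => add_lie (x i) (y i) (z i)
  lie_add x y z := funext fun i => lie_add (x i) (y i) (z i)
  lie_self x := funext fun i => lie_self (x i)
  leibniz_lie x y z := funext fun i => leibniz_lie (x i) (y i) (z i)

/-- Componentwise Lie algebra structure on a product of Lie algebras. -/
instance Pi.lieAlgebra {k ι : Type*} [CommRing k] (L : ι → Type*) [∀ i, LieRing (L i)]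
    [∀ i, LieAlgebra k (L i)] : LieAlgebra k (∀ i, L i) where
  lie_smul c x y := funext fun i => lie_smul c (x i) (y i)

open LieAlgebra.SpecialLinear Module

open Polynomial in
lemma aux_decomp.{u, v} (k : Type u) [Field k] (V : Type v) [AddCommGroup V] [Module k V]
    [FiniteDimensional k V] (f : V →ₗ[k] V) :
    ∃ (ι : Type u) (_ : Fintype ι) (I : ι → Ideal k[X])
      (E : V ≃ₗ[k] (∀ i, k[X] ⧸ I i)), ∀ v, E (f v) = (X : k[X]) • E v := by
  classical
  obtain ⟨ι, hι, p, _, e, ⟨E⟩⟩ := Module.equiv_directSum_of_isTorsion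
    (R := k[X]) (M := Module.AEval' f) (Module.AEval.isTorsion_of_finiteDimensional k V f)
  let E1 := E.trans (DirectSum.linearEquivFunOnFintype k[X] ι _)
  refine ⟨ι, hι, _, (Module.AEval'.of f).trans (E1.restrictScalars k), fun v => ?_⟩
  have h1 := Module.AEval'.X_smul_of f v
  simp only [LinearEquiv.trans_apply, LinearEquiv.restrictScalars_apply]
  rw [← h1, map_smul]

open Polynomial in
lemma aux_smul {k : Type*} [Field k] (I : Ideal k[X]) (c : k) (z : k[X] ⧸ I) :
    c • z = algebraMap k (k[X] ⧸ I) c * z := by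
  obtain ⟨p, rfl⟩ := Ideal.Quotient.mk_surjective z
  change Ideal.Quotient.mk I (c • p) = Ideal.Quotient.mk I (algebraMap k k[X] c)
    * Ideal.Quotient.mk I p
  rw [Algebra.smul_def, map_mul]

open Polynomial in
lemma aux_smul' {k : Type*} [Field k] (I : Ideal k[X]) (c : k[X]) (z : k[X] ⧸ I) :
    c • z = Ideal.Quotient.mk I c * z := by
  obtain ⟨p, rfl⟩ := Ideal.Quotient.mk_surjective z
  rfl

open Polynomial in
lemma aux_smul_C {k ι : Type*} [Field k] (I : ι → Ideal k[X]) (c : k) (z : ∀ i, k[X] ⧸ I i) :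
    (C c) • z = c • z := by
  ext i
  rw [Pi.smul_apply, Pi.smul_apply, aux_smul, aux_smul']
  rfl

/-- The map sending a ring element to the conjugated multiplication operator. -/
def auxMul {k V A : Type*} [Field k] [AddCommGroup V] [Module k V]
    [CommRing A] [Algebra k A] (E : V ≃ₗ[k] A) : A →ₗ[k] (V →ₗ[k] V) :=
  (E.symm.conj.toLinearMap) ∘ₗ (Algebra.lmul k A).toLinearMap

lemma auxMul_apply {k V A : Type*} [Field k] [AddCommGroup V] [Module k V]
    [CommRing A] [Algebra k A] (E : V ≃ₗ[k] A) (a : A) (v : V) :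
    auxMul E a v = E.symm (a * E v) := by
  simp [auxMul, LinearEquiv.conj_apply]

open Polynomial in
lemma aux_comm {k V ι : Type*} [Field k] [AddCommGroup V] [Module k V] [Fintype ι]
    (I : ι → Ideal k[X]) (E : V ≃ₗ[k] (∀ i, k[X] ⧸ I i)) (f : V →ₗ[k] V)
    (hf : ∀ v, E (f v) = (X : k[X]) • E v) (c : ι → k) (hc : Function.Injective c)
    (g : V →ₗ[k] V) (hgf : ∀ v, g (f v) = f (g v))
    (hgh : ∀ v, g (auxMul E (fun i => algebraMap k _ (c i)) v)
      = auxMul E (fun i => algebraMap k _ (c i)) (g v)) :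
    ∃ a, auxMul E a = g := by
  classical
  let G : (∀ i, k[X] ⧸ I i) →ₗ[k] (∀ i, k[X] ⧸ I i) := E.conj g
  have hG : ∀ a, G a = E (g (E.symm a)) := fun a => by simp [G, LinearEquiv.conj_apply]
  have hX : ∀ a, G ((X : k[X]) • a) = (X : k[X]) • G a := by
    intro a
    have h1 : E.symm ((X : k[X]) • a) = f (E.symm a) := by
      rw [LinearEquiv.symm_apply_eq, hf, LinearEquiv.apply_symm_apply]
    rw [hG, hG, h1, hgf, hf]
  have hP : ∀ (p : k[X]) a, G (p • a) = p • G a := by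
    intro p
    induction p using Polynomial.induction_on' with
    | add p q hp hq => 
      intro a
      have hadd : ∀ b : (∀ i, k[X] ⧸ I i), (p + q) • b = p • b + q • b := by
        intro b
        ext i
        rw [Pi.add_apply, Pi.smul_apply, Pi.smul_apply, Pi.smul_apply, aux_smul', aux_smul',
          aux_smul', map_add, add_mul]
      rw [hadd, hadd, map_add, hp, hq]
    | monomial n r =>
      induction n with
      | zero =>
        intro a
        rw [Polynomial.monomial_zero_left, aux_smul_C, aux_smul_C, map_smul]
      | succ n ih =>
        intro a
        rw [← Polynomial.monomial_mul_X, mul_smul, mul_smul, ih, hX]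
  have hcc : ∀ a, G ((fun i => algebraMap k _ (c i)) * a)
      = (fun i => algebraMap k _ (c i)) * G a := by
    intro a
    have := hgh (E.symm a)
    rw [auxMul_apply, auxMul_apply] at this
    rw [hG, hG]
    simp only [LinearEquiv.apply_symm_apply] at this
    rw [this]; simp
  have hoff : ∀ i j, j ≠ i → G (Pi.single i 1) j = 0 := by
    intro i j hij
    have h1 : ((fun i => algebraMap k _ (c i)) * Pi.single i 1 : ∀ i, k[X] ⧸ I i)
        = c i • Pi.single i 1 := by
      ext l
      by_cases h : l = i
      · subst h; simp [aux_smul]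
      · simp [h]
    have h2 := congrFun (hcc (Pi.single i 1)) j
    rw [h1, map_smul] at h2
    simp only [Pi.smul_apply, Pi.mul_apply, ← aux_smul] at h2
    have h3 : (c i - c j) • G (Pi.single i 1) j = 0 := by rw [sub_smul, h2, sub_self]
    rcases smul_eq_zero.mp h3 with h | h
    · exact absurd (hc (sub_eq_zero.mp h)).symm hij
    · exact h
  have hG1 : ∀ i, G 1 i = G (Pi.single i 1) i := by
    intro i
    have h1 : (1 : ∀ i, k[X] ⧸ I i) = ∑ j, Pi.single j 1 := by
      exact (Finset.univ_sum_single (1 : ∀ i, k[X] ⧸ I i)).symm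
    rw [h1, map_sum, Finset.sum_apply, Finset.sum_eq_single i]
    · intro j _ hj; exact hoff j i hj.symm
    · simp
  have key : ∀ a, G a = G 1 * a := by
    intro a
    choose r hr using fun i => Ideal.Quotient.mk_surjective (a i)
    have h1 : a = ∑ j, r j • (Pi.single j 1 : ∀ i, k[X] ⧸ I i) := by
      conv_lhs => rw [← Finset.univ_sum_single a]
      refine Finset.sum_congr rfl fun j _ => ?_
      rw [← Pi.single_smul, ← hr j, aux_smul', mul_one]
    ext i
    conv_lhs => rw [h1]
    rw [map_sum, Finset.sum_apply, Finset.sum_eq_single i]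
    · rw [hP, Pi.smul_apply, Pi.mul_apply, hG1, ← hr i, aux_smul', mul_comm]
    · intro j _ hj
      rw [hP, Pi.smul_apply, hoff j i hj.symm, smul_zero]
    · simp
  refine ⟨G 1, ?_⟩
  ext v
  rw [auxMul_apply, ← key, hG]
  simp

lemma aux_single (k : Type*) [Field k] [CharZero k] (n : ℕ) (x : Matrix (Fin n) (Fin n) k) :
    ∃ H : Matrix (Fin n) (Fin n) k, H.trace = 0 ∧
      (∃ u : (Matrix (Fin n) (Fin n) k)ˣ, Matrix.IsDiag
        ((↑u⁻¹ : Matrix (Fin n) (Fin n) k) * H * (↑u : Matrix (Fin n) (Fin n) k))) ∧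
      H * x = x * H ∧
      ∃ S : Submodule k (Matrix (Fin n) (Fin n) k),
        (∀ Y, Y ∈ S ↔ H * Y = Y * H ∧ x * Y = Y * x ∧ Y.trace = 0) ∧ finrank k S = n - 1 := by
  classical
  rcases Nat.eq_zero_or_pos n with rfl | hn
  · refine ⟨0, by simp, ⟨1, ?_⟩, Subsingleton.elim _ _, ⊤, fun Y => ?_, ?_⟩
    · intro i; exact i.elim0
    · simp [Subsingleton.elim Y 0]
    · exact finrank_zero_of_subsingleton
  have hn0 : (n : k) ≠ 0 := by exact_mod_cast hn.ne'
  obtain ⟨ι, hι, I, E, hE⟩ := aux_decomp k (Fin n → k) (Matrix.toLin' x)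
  let c : ι → k := fun i => ((Fintype.equivFin ι i : ℕ) : k)
  have hc : Function.Injective c := by
    intro i j hij
    apply (Fintype.equivFin ι).injective
    apply Fin.ext
    exact Nat.cast_injective (R := k) hij
  let a0 : ∀ i, Polynomial k ⧸ I i := fun i => algebraMap k _ (c i)
  let h0 : (Fin n → k) →ₗ[k] (Fin n → k) := auxMul E a0
  let H0 : Matrix (Fin n) (Fin n) k := LinearMap.toMatrix' h0
  let t : k := H0.trace / n
  let H : Matrix (Fin n) (Fin n) k := H0 - t • 1
  have hcomm : ∀ Y, H * Y = Y * H ↔ H0 * Y = Y * H0 := by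
    intro Y
    simp [H, sub_mul, mul_sub]
  let ψ : (∀ i, Polynomial k ⧸ I i) →ₗ[k] Matrix (Fin n) (Fin n) k :=
    LinearMap.toMatrix'.toLinearMap ∘ₗ auxMul E
  have hψ : Function.Injective ψ := by
    intro a b hab
    have h1 : auxMul E a = auxMul E b := LinearMap.toMatrix'.injective hab
    have h2 := LinearMap.congr_fun h1 (E.symm 1)
    rw [auxMul_apply, auxMul_apply] at h2
    simpa using h2
  have hmul : ∀ a b, ψ a * ψ b = ψ (a * b) := by
    intro a b
    change LinearMap.toMatrix' _ * LinearMap.toMatrix' _ = LinearMap.toMatrix' _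
    rw [← LinearMap.toMatrix'_comp]
    congr 1
    apply LinearMap.ext
    intro v
    simp only [LinearMap.comp_apply, auxMul_apply, LinearEquiv.apply_symm_apply, mul_assoc]
  have hcomm' : ∀ a b, ψ a * ψ b = ψ b * ψ a := by
    intro a b; rw [hmul, hmul, mul_comm]
  have hx : ψ (fun i => algebraMap (Polynomial k) _ Polynomial.X) = x := by
    change LinearMap.toMatrix' _ = _
    rw [← LinearMap.toMatrix'_toLin' x]
    congr 1
    apply LinearMap.ext
    intro v
    rw [auxMul_apply, LinearEquiv.symm_apply_eq, hE]
    ext i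
    rw [Pi.smul_apply, Pi.mul_apply, aux_smul']
    rfl
  have hH0 : ψ a0 = H0 := rfl
  have hrange : ∀ Y, Y ∈ LinearMap.range ψ ↔ H * Y = Y * H ∧ x * Y = Y * x := by
    intro Y
    rw [hcomm]
    constructor
    · rintro ⟨a, rfl⟩
      rw [← hH0]
      refine ⟨hcomm' _ _, ?_⟩
      have := hcomm' (fun i => algebraMap (Polynomial k) _ Polynomial.X) a
      rwa [hx] at this
    · rintro ⟨h1, h2⟩
      obtain ⟨a, ha⟩ := aux_comm I E (Matrix.toLin' x) hE c hc (Matrix.toLin' Y)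
        (fun v => by
          rw [← LinearMap.comp_apply, ← LinearMap.comp_apply, ← Matrix.toLin'_mul,
            ← Matrix.toLin'_mul, h2])
        (fun v => by
          have h3 : auxMul E (fun i => algebraMap k _ (c i)) = Matrix.toLin' H0 := by
            simp only [H0, Matrix.toLin'_toMatrix']; rfl
          rw [h3, ← LinearMap.comp_apply, ← LinearMap.comp_apply, ← Matrix.toLin'_mul,
            ← Matrix.toLin'_mul, h1])
      refine ⟨a, ?_⟩
      change LinearMap.toMatrix' _ = _
      rw [ha, LinearMap.toMatrix'_toLin']
  have hfr : finrank k (LinearMap.range ψ) = n := by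
    rw [LinearMap.finrank_range_of_inj hψ, ← E.finrank_eq]; simp
  refine ⟨H, ?_, ?_, ?_, ?_⟩
  · simp only [H, t, Matrix.trace_sub, Matrix.trace_smul, Matrix.trace_one, Fintype.card_fin,
      smul_eq_mul]
    field_simp
    simp
  · let b0 := (Pi.basis fun i => Module.Free.chooseBasis k (Polynomial k ⧸ I i)).map E.symm
    have hb0 : ∀ j, h0 (b0 j) = c j.1 • b0 j := by
      intro j
      simp only [h0, auxMul_apply, b0, Basis.map_apply, LinearEquiv.apply_symm_apply]
      rw [← map_smul]
      congr 1
      ext l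
      by_cases hl : l = j.1
      · subst hl; simp [a0, aux_smul]
      · simp [hl, Pi.basis_apply]
    let σ := b0.indexEquiv (Pi.basisFun k (Fin n))
    let b := b0.reindex σ
    let d : Fin n → k := fun j => c (σ.symm j).1 - t
    have hb : ∀ j, H.mulVec (b j) = d j • b j := by
      intro j
      have : H0.mulVec (b j) = h0 (b j) := by
        simp only [H0, LinearMap.toMatrix'_mulVec]
      simp only [b, Basis.reindex_apply] at this ⊢
      simp only [H, Matrix.sub_mulVec, d, sub_smul, this, hb0]
      simp [Matrix.smul_mulVec]
    let P := (Pi.basisFun k (Fin n)).toMatrix b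
    let Q := b.toMatrix (Pi.basisFun k (Fin n))
    let u : (Matrix (Fin n) (Fin n) k)ˣ :=
      ⟨P, Q, Basis.toMatrix_mul_toMatrix_flip _ _, Basis.toMatrix_mul_toMatrix_flip _ _⟩
    have hHP : H * P = P * Matrix.diagonal d := by
      ext i j
      have := congrFun (hb j) i
      rw [Matrix.mul_diagonal]
      simp only [Matrix.mul_apply, P, Basis.toMatrix_apply, Pi.basisFun_repr]
      simp only [Matrix.mulVec, dotProduct, Pi.smul_apply, smul_eq_mul] at this
      rw [this, mul_comm]
    refine ⟨u, ?_⟩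
    have : (↑u⁻¹ : Matrix (Fin n) (Fin n) k) * H * (↑u : Matrix (Fin n) (Fin n) k)
        = Matrix.diagonal d := by
      rw [mul_assoc]
      change (↑u⁻¹ : Matrix (Fin n) (Fin n) k) * (H * P) = _
      rw [hHP]
      exact Units.inv_mul_cancel_left u _
    rw [this]
    exact Matrix.isDiag_diagonal d
  · rw [hcomm, ← hH0, ← hx]; exact hcomm' _ _
  · let tr : LinearMap.range ψ →ₗ[k] k :=
      (Matrix.traceLinearMap (Fin n) k k).domRestrict (LinearMap.range ψ)
    have htr : tr ≠ 0 := by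
      intro h
      have h1 : (1 : Matrix (Fin n) (Fin n) k) ∈ LinearMap.range ψ := by
        rw [hrange]; simp
      have h2 := LinearMap.congr_fun h ⟨1, h1⟩
      have h3 : (1 : Matrix (Fin n) (Fin n) k).trace = 0 := h2
      rw [Matrix.trace_one, Fintype.card_fin] at h3
      exact hn0 h3
    have hk := Module.Dual.finrank_ker_add_one_of_ne_zero (f := tr) htr
    refine ⟨(LinearMap.ker tr).map (LinearMap.range ψ).subtype, ?_, ?_⟩
    · intro Y
      rw [Submodule.mem_map]
      constructor
      · rintro ⟨⟨y, hy⟩, h1, rfl⟩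
        have := (hrange y).mp hy
        exact ⟨this.1, this.2, h1⟩
      · rintro ⟨h1, h2, h3⟩
        exact ⟨⟨Y, (hrange Y).mpr ⟨h1, h2⟩⟩, h3, rfl⟩
    · rw [Submodule.finrank_map_subtype_eq]
      omega

/-- Let `m = sl_{n₁} ⊕ … ⊕ sl_{n_q}` be a finite direct sum of special
linear Lie algebras over an algebraically closed field `k` of characteristic zero, and let
`x ∈ m` be a nilpotent element (each matrix component is nilpotent).  Then there is a
semisimple element `h ∈ m` (each matrix component is diagonalizable) commuting with `x`
such that `x` is a regular element of the centralizer `m_h`:  the centralizer of `x` inside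
`m_h` has dimension `rk m = (n₁ - 1) + … + (n_q - 1)`. -/
theorem exists_semisimple_commuting_with_regular_nilpotent
    (k : Type*) [Field k] [IsAlgClosed k] [CharZero k]
    (q : ℕ) (n : Fin q → ℕ)
    (x : ∀ i : Fin q, ↥(sl (Fin (n i)) k))
    (hx : ∀ i, IsNilpotent ((x i : Matrix (Fin (n i)) (Fin (n i)) k))) :
    ∃ h : ∀ i : Fin q, ↥(sl (Fin (n i)) k),
      (∀ i, ∃ u : (Matrix (Fin (n i)) (Fin (n i)) k)ˣ,
        Matrix.IsDiag ((↑u⁻¹ : Matrix (Fin (n i)) (Fin (n i)) k)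
          * (h i : Matrix (Fin (n i)) (Fin (n i)) k) * (↑u : Matrix (Fin (n i)) (Fin (n i)) k))) ∧
      ⁅h, x⁆ = 0 ∧
      Module.finrank k
          ↥(LinearMap.ker (LieAlgebra.ad k (∀ i : Fin q, ↥(sl (Fin (n i)) k)) h)
            ⊓ LinearMap.ker (LieAlgebra.ad k (∀ i : Fin q, ↥(sl (Fin (n i)) k)) x))
        = ∑ i, (n i - 1) := by
  choose H htr hdiag hcomm S hS hfr using fun i => aux_single k (n i) (x i).1
  have hker : ∀ (z y : ∀ i : Fin q, ↥(sl (Fin (n i)) k)),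
      ⁅z, y⁆ = 0 ↔ ∀ i, (z i).1 * (y i).1 = (y i).1 * (z i).1 := by
    intro z y
    rw [funext_iff]
    refine forall_congr' fun i => ?_
    rw [← sub_eq_zero (a := (z i).1 * (y i).1), ← sl_bracket]
    exact (ZeroMemClass.coe_eq_zero (x := ⁅z i, y i⁆)).symm
  let h : ∀ i : Fin q, ↥(sl (Fin (n i)) k) := fun i => ⟨H i, htr i⟩
  refine ⟨h, hdiag, (hker _ _).mpr hcomm, ?_⟩
  have hmem : ∀ y, y ∈ LinearMap.ker (LieAlgebra.ad k (∀ i : Fin q, ↥(sl (Fin (n i)) k)) h)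
            ⊓ LinearMap.ker (LieAlgebra.ad k (∀ i : Fin q, ↥(sl (Fin (n i)) k)) x)
        ↔ ∀ i, (y i).1 ∈ S i := by
    intro y
    rw [Submodule.mem_inf, LinearMap.mem_ker, LinearMap.mem_ker, LieAlgebra.ad_apply,
      LieAlgebra.ad_apply, hker, hker, ← forall_and]
    refine forall_congr' fun i => ?_
    rw [hS]
    exact ⟨fun h => ⟨h.1, h.2, (y i).2⟩, fun h => ⟨h.1, h.2.1⟩⟩
  let Φ : ↥(LinearMap.ker (LieAlgebra.ad k (∀ i : Fin q, ↥(sl (Fin (n i)) k)) h)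
            ⊓ LinearMap.ker (LieAlgebra.ad k (∀ i : Fin q, ↥(sl (Fin (n i)) k)) x))
      ≃ₗ[k] (∀ i, S i) :=
    { toFun := fun y i => ⟨(y.1 i).1, (hmem y.1).mp y.2 i⟩
      invFun := fun s => ⟨fun i => ⟨(s i).1, ((hS i _).mp (s i).2).2.2⟩,
        (hmem _).mpr fun i => (s i).2⟩
      map_add' := fun _ _ => rfl
      map_smul' := fun _ _ => rfl
      left_inv := fun _ => rfl
      right_inv := fun _ => rfl }
  rw [Φ.finrank_eq, Module.finrank_pi_fintype]
  exact Finset.sum_congr rfl fun i _ => hfr i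
end
end

section
/- Let m = sl_{n₁} ⊕ … ⊕ sl_{n_q} and let x ∈ m be a nilpotent element. Then codim_{m_x} I(m_x) ≥ 1, where I(m_x) := {y ∈ m_x : dim (m_x)_y > rk m}; equivalently, there exists y ∈ m_x with dim (m_x)_y = rk m = (n₁ − 1) + … + (n_q − 1), so that I(m_x) is a proper Zariski-closed subset of m_x. -/
noncomputable section

open LieAlgebra.SpecialLinear Module

theorem CVaux.pullback {k V ι σ : Type*} [Field k] [AddCommGroup V] [Module k V] [Fintype σ]
    (B : Module.Basis σ k V) (l : ι → V →ₗ[k] k) (F : MvPolynomial ι k) :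
    ∃ G : MvPolynomial σ k, ∀ v : V,
      MvPolynomial.aeval (fun s => B.repr v s) G = MvPolynomial.aeval (fun i => l i v) F := by
  refine ⟨MvPolynomial.aeval (fun i => ∑ s, MvPolynomial.C (l i (B s)) * MvPolynomial.X s) F, ?_⟩
  intro v
  rw [← AlgHom.comp_apply]
  congr 1
  ext i
  simp only [AlgHom.coe_comp, Function.comp_apply, MvPolynomial.aeval_X, map_sum, map_mul,
    MvPolynomial.aeval_C]
  conv_rhs => rw [← B.sum_repr v]
  rw [map_sum]
  refine Finset.sum_congr rfl fun s _ => ?_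
  rw [map_smul, smul_eq_mul, mul_comm]
  rfl

theorem CVaux.open_sep {k V : Type*} [Field k] [AddCommGroup V] [Module k V]
    [FiniteDimensional k V] {U : Set V} (hU : @IsOpen V (CV.zar k V) U) :
    ∀ z ∈ U, ∃ F, CV.evalP k V F z ≠ 0 ∧ ∀ w, w ∉ U → CV.evalP k V F w = 0 := by
  induction hU with
  | basic s hs =>
    obtain ⟨F, rfl⟩ := hs
    intro z hz
    exact ⟨F, hz, fun w hw => by simpa using hw⟩
  | univ => exact fun z _ => ⟨1, by simp [CV.evalP], fun w hw => absurd trivial hw⟩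
  | inter s t _ _ ihs iht =>
    intro z hz
    obtain ⟨F, hF, hF'⟩ := ihs z hz.1
    obtain ⟨G, hG, hG'⟩ := iht z hz.2
    refine ⟨F * G, ?_, ?_⟩
    · simp only [CV.evalP, map_mul] at *
      exact mul_ne_zero hF hG
    · intro w hw
      simp only [CV.evalP, map_mul] at *
      by_cases h : w ∈ s
      · rw [hG' w (fun h' => hw ⟨h, h'⟩), mul_zero]
      · rw [hF' w h, zero_mul]
  | sUnion S _ ih =>
    rintro z ⟨s, hs, hz⟩
    obtain ⟨F, hF, hF'⟩ := ih s hs z hz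
    exact ⟨F, hF, fun w hw => hF' w (fun h => hw ⟨s, hs, h⟩)⟩

theorem CVaux.dimSet_add_one_le {k V : Type*} [Field k] [AddCommGroup V] [Module k V]
    [FiniteDimensional k V] (W : Submodule k V) (S : Set V) (hS : S ⊆ W) {d : ℕ}
    (b : Module.Basis (Fin d) k W) (D : MvPolynomial (Fin d) k) (hD0 : D ≠ 0)
    (hD : ∀ w : W, (w : V) ∈ S → MvPolynomial.aeval (fun i => b.repr w i) D = 0) :
    CV.dimSet k V S + 1 ≤ ((d : ℕ∞) : WithBot ℕ∞) := by
  let _ : TopologicalSpace S := TopologicalSpace.induced Subtype.val (CV.zar k V)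
  have key : ∀ p : LTSeries (TopologicalSpace.IrreducibleCloseds S), p.length + 1 ≤ d := by
    intro p
    let ev : MvPolynomial (Fin d) k → S → k := fun F s =>
      MvPolynomial.aeval (fun i => b.repr ⟨s.1, hS s.2⟩ i) F
    have hopen : ∀ F, IsOpen {s : S | ev F s ≠ 0} := by
      intro F
      have : ∀ i, ∃ g : V →ₗ[k] k, g ∘ₗ W.subtype = b.coord i :=
        fun i => LinearMap.exists_extend (b.coord i)
      choose l hl using this
      obtain ⟨G, hG⟩ := CVaux.pullback (Module.Free.chooseBasis k V) l F
      refine ⟨{z | CV.evalP k V G z ≠ 0}, TopologicalSpace.isOpen_generateFrom_of_mem ⟨G, rfl⟩, ?_⟩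
      ext s
      have h1 : CV.evalP k V G s.1 = ev F s := by
        change MvPolynomial.aeval _ G = _
        refine (hG s.1).trans ?_
        simp only [ev]
        congr 2
        funext i
        exact LinearMap.congr_fun (hl i) ⟨s.1, hS s.2⟩
      simp [h1]
    let P : TopologicalSpace.IrreducibleCloseds S → PrimeSpectrum (MvPolynomial (Fin d) k) :=
      fun T =>
      { asIdeal :=
          { carrier := {F | ∀ t ∈ (T : Set S), ev F t = 0}
            add_mem' := fun {F G} hF hG t ht => by
              have := hF t ht
              have := hG t ht
              simp_all [ev]
            zero_mem' := fun t ht => by simp [ev]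
            smul_mem' := fun c F hF t ht => by
              have := hF t ht
              simp_all [ev] }
        isPrime := by
          constructor
          · obtain ⟨t, ht⟩ := T.isIrreducible.1
            intro h
            have := (Ideal.eq_top_iff_one _).1 h t ht
            simp [ev] at this
          · intro F G hFG
            by_contra hcon
            push Not at hcon
            obtain ⟨h1, h2⟩ := hcon
            have h1' : ∃ t ∈ (T : Set S), ev F t ≠ 0 := by
              by_contra h; push Not at h; exact h1 h
            have h2' : ∃ t ∈ (T : Set S), ev G t ≠ 0 := by
              by_contra h; push Not at h; exact h2 h
            obtain ⟨t, ht, h⟩ := T.isIrreducible.2 _ _ (hopen F) (hopen G) h1' h2'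
            have := hFG t ht
            simp only [ev, map_mul] at this
            exact (mul_ne_zero h.1 h.2) this }
    have hPanti : ∀ T T', T < T' → P T' < P T := by
      intro T T' h
      refine lt_of_le_not_ge (fun F hF t ht => hF t (h.le ht)) ?_
      intro hle
      apply h.not_ge
      intro t ht
      by_contra hnt
      obtain ⟨U, hU, hUT⟩ := T.isClosed.isOpen_compl
      have htU : t.1 ∈ U := by
        have : t ∈ (Subtype.val ⁻¹' U : Set S) := by rw [hUT]; exact hnt
        exact this
      obtain ⟨F, hF, hF'⟩ := CVaux.open_sep hU t.1 htU
      obtain ⟨G, hG⟩ := CVaux.pullback b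
        (fun i => ((Module.Free.chooseBasis k V).coord i) ∘ₗ W.subtype) F
      have hGF : ∀ s : S, ev G s = CV.evalP k V F s.1 := fun s => hG ⟨s.1, hS s.2⟩
      have : G ∈ (P T).asIdeal := by
        intro s hs
        rw [hGF]
        apply hF'
        intro hsU
        have : s ∈ (Subtype.val ⁻¹' U : Set S) := hsU
        rw [hUT] at this
        exact this hs
      have := hle this t ht
      rw [hGF] at this
      exact hF this
    let p' : LTSeries (PrimeSpectrum (MvPolynomial (Fin d) k)) :=
      p.reverse.map ⟨P, fun {a b} h => hPanti _ _ h⟩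
    have hlast : (⊥ : PrimeSpectrum (MvPolynomial (Fin d) k)) < p'.head := by
      refine bot_lt_iff_ne_bot.2 ?_
      intro h
      have hmem : D ∈ (P p.last).asIdeal := fun t _ => hD ⟨t.1, hS t.2⟩ t.2
      have h2 : p'.head = P p.last := by simp [p']
      rw [← h2, h] at hmem
      exact hD0 (by simpa using hmem)
    have h3 := Order.LTSeries.length_le_krullDim (p'.cons ⊥ hlast)
    have h4 : Order.krullDim (PrimeSpectrum (MvPolynomial (Fin d) k)) = d := by
      have := MvPolynomial.ringKrullDim_of_isNoetherianRing (R := k) (ι := Fin d)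
      rw [ringKrullDim_eq_zero_of_field, zero_add, Nat.card_fin] at this
      exact this
    rw [h4] at h3
    simp [p'] at h3
    exact_mod_cast h3
  change Order.krullDim (TopologicalSpace.IrreducibleCloseds S) + 1 ≤ _
  rcases isEmpty_or_nonempty (TopologicalSpace.IrreducibleCloseds S) with h | h
  · rw [Order.krullDim_eq_bot]; simp
  · obtain ⟨T⟩ := h
    have hd := key (RelSeries.singleton _ T)
    obtain ⟨e, rfl⟩ : ∃ e, d = e + 1 := ⟨d - 1, by omega⟩
    have : Order.krullDim (TopologicalSpace.IrreducibleCloseds S) ≤ ((e : ℕ∞) : WithBot ℕ∞) := by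
      refine iSup_le fun p => ?_
      have := key p
      have : p.length ≤ e := by omega
      exact_mod_cast this
    calc _ ≤ ((e : ℕ∞) : WithBot ℕ∞) + 1 := by gcongr
      _ = _ := by push_cast; rfl

theorem CVaux.exists_poly {k W g : Type*} [Field k] [AddCommGroup W] [Module k W]
    [AddCommGroup g] [Module k g] [FiniteDimensional k W] {d : ℕ}
    (b : Module.Basis (Fin d) k W) (φ : W →ₗ[k] W →ₗ[k] g) (y : W) (r : ℕ)
    (hy : Module.finrank k (LinearMap.ker (φ y)) ≤ r) :
    ∃ D : MvPolynomial (Fin d) k, D ≠ 0 ∧ ∀ w : W,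
      r < Module.finrank k (LinearMap.ker (φ w)) →
        MvPolynomial.aeval (fun i => b.repr w i) D = 0 := by
  obtain ⟨U, hU⟩ := Submodule.exists_isCompl (LinearMap.ker (φ y))
  have hdim := Submodule.finrank_add_eq_of_isCompl hU
  have hinj : LinearMap.ker (φ y ∘ₗ U.subtype) = ⊥ := by
    rw [LinearMap.ker_eq_bot']
    intro u hu
    have h1 : (u : W) ∈ LinearMap.ker (φ y) := hu
    have := hU.disjoint.le_bot ⟨h1, u.2⟩
    exact Subtype.ext (by simpa using this)
  obtain ⟨c, hc⟩ := LinearMap.exists_leftInverse_of_injective _ hinj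
  let L : W →ₗ[k] Module.End k U :=
    (LinearMap.llcomp k U g U c) ∘ₗ (LinearMap.lcomp k g U.subtype) ∘ₗ φ
  have hL : ∀ w u, L w u = c (φ w u) := fun w u => rfl
  let β := Module.finBasis k U
  let M : Matrix (Fin (Module.finrank k U)) (Fin (Module.finrank k U)) (MvPolynomial (Fin d) k) :=
    fun i j => ∑ s, MvPolynomial.C (LinearMap.toMatrix β β (L (b s)) i j) * MvPolynomial.X s
  have hM : ∀ w, MvPolynomial.aeval (fun i => b.repr w i) M.det = LinearMap.det (L w) := by
    intro w
    rw [← LinearMap.det_toMatrix β, AlgHom.map_det]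
    congr 1
    ext i j
    change MvPolynomial.aeval (fun i => b.repr w i) (∑ s, MvPolynomial.C
      (LinearMap.toMatrix β β (L (b s)) i j) * MvPolynomial.X s) = _
    simp only [map_sum, map_mul, MvPolynomial.aeval_C, MvPolynomial.aeval_X]
    conv_rhs => rw [← b.sum_repr w]
    rw [map_sum L, map_sum (LinearMap.toMatrix β β), Matrix.sum_apply]
    refine Finset.sum_congr rfl fun s _ => ?_
    rw [map_smul, map_smul, Matrix.smul_apply, smul_eq_mul, mul_comm]
    rfl
  refine ⟨M.det, ?_, ?_⟩
  · intro h0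
    have h1 := hM y
    have h2 : L y = LinearMap.id := hc
    rw [h0, h2] at h1
    simp at h1
  · intro w hw
    rw [hM]
    by_contra hne
    have hker : LinearMap.ker (L w) = ⊥ := by
      by_contra hk
      exact hne (LinearMap.det_eq_zero_iff_ker_ne_bot.2 hk)
    have hdisj : Disjoint (LinearMap.ker (φ w)) U := by
      rw [Submodule.disjoint_def]
      intro u hu hu'
      have : (⟨u, hu'⟩ : U) ∈ LinearMap.ker (L w) := by
        rw [LinearMap.mem_ker, hL]
        have : φ w u = 0 := hu
        simp [this]
      rw [hker] at this
      simpa using this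
    have := Submodule.finrank_add_finrank_le_of_disjoint hdisj
    omega

open Polynomial in
theorem CVaux.gl_aux {k V : Type*} [Field k] [Infinite k] [AddCommGroup V] [Module k V]
    {ι : Type*} [Fintype ι] (I : ι → Ideal k[X]) (f : Module.End k V)
    (e : V ≃ₗ[k] (∀ i, k[X] ⧸ I i))
    (he : ∀ v, e (f v) = (X : k[X]) • e v) :
    ∃ g : Module.End k V, f * g = g * f ∧ ∃ j : V →ₗ[k] Module.End k V, Function.Injective j ∧
      ∀ h, h ∈ LinearMap.range j ↔ (f * h = h * f ∧ g * h = h * g) := by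
  classical
  let A := ∀ i, k[X] ⧸ I i
  let ξ : A := fun i => Ideal.Quotient.mk _ X
  let c : ι ↪ k := (Fintype.equivFin ι).toEmbedding.trans
    (Fin.valEmbedding.trans (Infinite.natEmbedding k))
  let y : A := fun i => algebraMap k _ (c i)
  have he' : ∀ v, e (f v) = ξ * e v := by
    intro v
    rw [he]
    funext i
    obtain ⟨q, hq⟩ := Ideal.Quotient.mk_surjective (e v i)
    change (X : k[X]) • (e v i) = Ideal.Quotient.mk _ X * e v i
    rw [← hq, ← map_mul]
    rfl
  let μ : A →ₗ[k] Module.End k V :=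
    (e.symm.conj : Module.End k A ≃ₗ[k] Module.End k V).toLinearMap ∘ₗ LinearMap.mul k A
  have hμ : ∀ a v, μ a v = e.symm (a * e v) := fun a v => rfl
  have hf : f = μ ξ := by
    ext v
    rw [hμ, ← he', e.symm_apply_apply]
  have hμμ : ∀ a a', μ a * μ a' = μ (a * a') := by
    intro a a'
    ext v
    simp [hμ, mul_assoc]
  refine ⟨μ y, by rw [hf, hμμ, hμμ, mul_comm], μ ∘ₗ e.toLinearMap, ?_, ?_⟩
  · intro a a' h
    have := congrArg e (LinearMap.congr_fun h (e.symm 1))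
    simpa [hμ] using this
  · intro h
    constructor
    · rintro ⟨v, rfl⟩
      simp only [LinearMap.comp_apply, hf, hμμ]
      exact ⟨by rw [mul_comm], by rw [mul_comm]⟩
    · rintro ⟨h1, h2⟩
      rw [hf] at h1
      let S : Subalgebra k A :=
        { carrier := {a | μ a * h = h * μ a}
          mul_mem' := by
            intro a a' ha ha'
            simp only [Set.mem_ofPred_eq] at *
            rw [← hμμ, mul_assoc, ha', ← mul_assoc, ha, mul_assoc]
          add_mem' := by
            intro a a' ha ha'
            simp only [Set.mem_ofPred_eq] at *
            rw [map_add, add_mul, mul_add, ha, ha']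
          algebraMap_mem' := by
            intro t
            have : μ (algebraMap k A t) = algebraMap k _ t := by
              ext v
              rw [hμ, ← Algebra.smul_def, map_smul, e.symm_apply_apply]
              simp [Module.algebraMap_end_apply]
            simp only [Set.mem_ofPred_eq, this]
            exact Algebra.commutes t h }
      have hξ : ξ ∈ S := h1
      have hy : y ∈ S := h2
      have hsing : ∀ i, (Pi.single i 1 : A) ∈ S := by
        intro i
        have h3 : (Pi.single i 1 : A) = aeval y (Lagrange.basis Finset.univ c i) := by
          funext l
          have h4 : (aeval y (Lagrange.basis Finset.univ c i)) l
              = aeval (y l) (Lagrange.basis Finset.univ c i) := by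
            have := Polynomial.aeval_algHom_apply (Pi.evalAlgHom k (fun i => k[X] ⧸ I i) l) y
              (Lagrange.basis Finset.univ c i)
            exact this.symm
          rw [h4]
          simp only [y, Polynomial.aeval_algebraMap_apply, Polynomial.coe_aeval_eq_eval]
          by_cases hl : l = i
          · subst hl
            rw [Lagrange.eval_basis_self c.injective.injOn (Finset.mem_univ _)]
            simp
          · rw [Lagrange.eval_basis_of_ne (Ne.symm hl) (Finset.mem_univ _)]
            simp [hl]
        rw [h3]
        exact Algebra.adjoin_le (Set.singleton_subset_iff.2 hy) (Polynomial.aeval_mem_adjoin_singleton k y)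
      have hall : ∀ a : A, a ∈ S := by
        intro a
        have : a = ∑ i, Pi.single i (a i) := (Finset.univ_sum_single a).symm
        rw [this]
        refine Subalgebra.sum_mem _ fun i _ => ?_
        obtain ⟨q, hq⟩ := Ideal.Quotient.mk_surjective (a i)
        have h5 : (Pi.single i (a i) : A) = Pi.single i 1 * aeval ξ q := by
          funext l
          by_cases hl : l = i
          · subst hl
            have := Polynomial.aeval_algHom_apply (Pi.evalAlgHom k (fun i => k[X] ⧸ I i) l) ξ q
            have h6 : (aeval ξ q) l = aeval (ξ l) q := this.symm
            have := Polynomial.aeval_algHom_apply (Ideal.Quotient.mkₐ k (I l)) X q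
            rw [Polynomial.aeval_X_left_apply] at this
            rw [Pi.mul_apply, h6, Pi.single_eq_same, Pi.single_eq_same, one_mul, ← hq]
            exact this.symm
          · change _ = (Pi.single i 1 : A) l * _
            simp [hl]
        rw [h5]
        exact S.mul_mem (hsing i) (Algebra.adjoin_le (Set.singleton_subset_iff.2 hξ)
          (Polynomial.aeval_mem_adjoin_singleton k ξ))
      refine ⟨h (e.symm 1), ?_⟩
      ext v
      have h7 := LinearMap.congr_fun (hall (e v)) (e.symm 1)
      simp only [Module.End.mul_apply, hμ, LinearEquiv.apply_symm_apply, mul_one,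
        LinearEquiv.symm_apply_apply] at h7
      simp only [LinearMap.comp_apply, hμ, LinearEquiv.coe_coe]
      rw [mul_comm, h7]

open Polynomial in
theorem CVaux.gl {k V : Type*} [Field k] [Infinite k] [AddCommGroup V] [Module k V]
    [FiniteDimensional k V] (f : Module.End k V) :
    ∃ g : Module.End k V, f * g = g * f ∧ ∃ j : V →ₗ[k] Module.End k V, Function.Injective j ∧
      ∀ h, h ∈ LinearMap.range j ↔ (f * h = h * f ∧ g * h = h * g) := by
  classical
  obtain ⟨ι, _, p, _, m, ⟨e⟩⟩ := Module.equiv_directSum_of_isTorsion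
    (Module.AEval.isTorsion_of_finiteDimensional k V f)
  let e2 := e.trans (DirectSum.linearEquivFunOnFintype k[X] ι
    (fun i => k[X] ⧸ Submodule.span k[X] {p i ^ m i}))
  refine CVaux.gl_aux (fun i => Submodule.span k[X] {p i ^ m i}) f
    ((Module.AEval'.of f).trans (e2.restrictScalars k)) ?_
  intro v
  change e2 (Module.AEval'.of f (f v)) = _
  rw [← Module.AEval'.X_smul_of, map_smul]
  rfl

theorem CVaux.sl_case {k : Type*} [Field k] [CharZero k] (n : ℕ) (x : sl (Fin n) k) :
    ∃ y ∈ LinearMap.ker (LieAlgebra.ad k (sl (Fin n) k) x),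
      Module.finrank k ↥(LinearMap.ker (LieAlgebra.ad k (sl (Fin n) k) x) ⊓
        LinearMap.ker (LieAlgebra.ad k (sl (Fin n) k) y)) = n - 1 := by
  have hcomm : ∀ a b : sl (Fin n) k, ⁅a, b⁆ = 0 ↔ a.1 * b.1 = b.1 * a.1 := by
    intro a b
    rw [← sub_eq_zero (a := a.1 * b.1), ← sl_bracket]
    exact Subtype.ext_iff
  rcases Nat.eq_zero_or_pos n with rfl | hn
  · refine ⟨0, by simp, ?_⟩
    have : Subsingleton (sl (Fin 0) k) := ⟨fun a b => Subtype.ext (Subsingleton.elim _ _)⟩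
    exact Module.finrank_zero_of_subsingleton
  have hn0 : (n : k) ≠ 0 := by exact_mod_cast hn.ne'
  have memsl : ∀ a : Matrix (Fin n) (Fin n) k, a ∈ sl (Fin n) k ↔ a.trace = 0 := fun a => Iff.rfl
  let E : Matrix (Fin n) (Fin n) k ≃ₐ[k] Module.End k (Fin n → k) := Matrix.toLinAlgEquiv'
  obtain ⟨g, hg, j, hj, hr⟩ := CVaux.gl (E x.1)
  let g' := E.symm g
  let j' : (Fin n → k) →ₗ[k] Matrix (Fin n) (Fin n) k := E.symm.toLinearEquiv.toLinearMap ∘ₗ j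
  have hj' : Function.Injective j' := E.symm.injective.comp hj
  have hr' : ∀ h, h ∈ LinearMap.range j' ↔ (x.1 * h = h * x.1 ∧ g' * h = h * g') := by
    intro h
    have h1 : h ∈ LinearMap.range j' ↔ E h ∈ LinearMap.range j := by
      constructor
      · rintro ⟨v, rfl⟩
        exact ⟨v, by simp [j']⟩
      · rintro ⟨v, hv⟩
        exact ⟨v, by simp [j', hv]⟩
    rw [h1, hr, ← E.injective.eq_iff, ← E.injective.eq_iff (a := g' * h)]
    simp [g']
  have hg' : x.1 * g' = g' * x.1 := by
    apply E.injective
    simpa [g'] using hg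
  let y' := g' - (g'.trace / n) • (1 : Matrix (Fin n) (Fin n) k)
  have hy' : y' ∈ sl (Fin n) k := by
    rw [memsl]
    simp [y', hn0]
  have hyc : ∀ h, y' * h = h * y' ↔ g' * h = h * g' := by
    intro h
    simp [y', sub_mul, mul_sub]
  refine ⟨⟨y', hy'⟩, ?_, ?_⟩
  · change ⁅x, _⁆ = 0
    rw [hcomm]
    exact ((hyc x.1).2 hg'.symm).symm
  · let τ : (Fin n → k) →ₗ[k] k := Matrix.traceLinearMap (Fin n) k k ∘ₗ j'
    have hτ : LinearMap.range τ = ⊤ := by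
      obtain ⟨v, hv⟩ := (hr' 1).2 (by simp)
      have : τ v = n := by simp [τ, hv]
      rw [LinearMap.range_eq_top]
      intro t
      exact ⟨(t / n) • v, by simp [this, hn0]⟩
    have hdim := τ.finrank_range_add_finrank_ker
    rw [hτ, finrank_top] at hdim
    simp at hdim
    let C := LinearMap.ker (LieAlgebra.ad k (sl (Fin n) k) x) ⊓
        LinearMap.ker (LieAlgebra.ad k (sl (Fin n) k) ⟨y', hy'⟩)
    let s : sl (Fin n) k →ₗ[k] Matrix (Fin n) (Fin n) k :=
      { toFun := Subtype.val
        map_add' := fun _ _ => rfl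
        map_smul' := fun _ _ => rfl }
    have hs : Function.Injective s := Subtype.val_injective
    have hmem : ∀ a : sl (Fin n) k, a ∈ C ↔ (x.1 * a.1 = a.1 * x.1 ∧ y' * a.1 = a.1 * y') := by
      intro a
      rw [← hcomm x a, ← hcomm ⟨y', hy'⟩ a]
      exact Iff.rfl
    have heq : C.map s = (LinearMap.ker τ).map j' := by
      ext a
      constructor
      · rintro ⟨c, hc, rfl⟩
        have h2 := (hmem c).1 hc
        rw [hyc, ← hr'] at h2
        obtain ⟨v, hv⟩ := h2
        refine ⟨v, ?_, hv⟩
        change (j' v).trace = 0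
        rw [hv]
        exact (memsl _).1 c.2
      · rintro ⟨v, hv, rfl⟩
        refine ⟨⟨j' v, (memsl _).2 hv⟩, ?_, rfl⟩
        exact (hmem _).2 (by rw [hyc]; exact (hr' _).1 ⟨v, rfl⟩)
    have e1 := (Submodule.equivMapOfInjective s hs C).finrank_eq
    have e2 := (Submodule.equivMapOfInjective j' hj' (LinearMap.ker τ)).finrank_eq
    rw [heq, ← e2] at e1
    change Module.finrank k C = n - 1
    omega

theorem CVaux.pi_case {k : Type*} [Field k] [CharZero k] (q : ℕ) (n : Fin q → ℕ)
    (x : ∀ i : Fin q, ↥(sl (Fin (n i)) k)) :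
    ∃ y ∈ LinearMap.ker (LieAlgebra.ad k (∀ i : Fin q, ↥(sl (Fin (n i)) k)) x),
      Module.finrank k
          ↥(LinearMap.ker (LieAlgebra.ad k (∀ i : Fin q, ↥(sl (Fin (n i)) k)) x)
            ⊓ LinearMap.ker (LieAlgebra.ad k (∀ i : Fin q, ↥(sl (Fin (n i)) k)) y))
        = ∑ i, (n i - 1) := by
  choose y hy hf using fun i => CVaux.sl_case (n i) (x i)
  refine ⟨y, funext fun i => hy i, ?_⟩
  rw [← Finset.sum_congr rfl (fun i _ => hf i), ← Module.finrank_pi_fintype]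
  refine LinearEquiv.finrank_eq ?_
  exact
    { toFun := fun z i => ⟨z.1 i, congrFun z.2.1 i, congrFun z.2.2 i⟩
      invFun := fun z => ⟨fun i => (z i).1, funext fun i => (z i).2.1, funext fun i => (z i).2.2⟩
      map_add' := fun _ _ => rfl
      map_smul' := fun _ _ => rfl
      left_inv := fun _ => rfl
      right_inv := fun _ => rfl }

theorem CVaux.fin_eq {k g : Type*} [Field k] [LieRing g] [LieAlgebra k g]
    (W : Submodule k g) (w : W) :
    Module.finrank k (LinearMap.ker (LieAlgebra.ad k g (w : g) ∘ₗ W.subtype)) =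
      Module.finrank k ↥(W ⊓ LinearMap.ker (LieAlgebra.ad k g (w : g))) := by
  rw [LinearMap.ker_comp, ← Submodule.map_comap_subtype]
  exact (Submodule.equivMapOfInjective W.subtype W.injective_subtype _).finrank_eq

/-- The restriction of the adjoint action to a subspace. -/
def CVaux.restrAd {k g : Type*} [Field k] [LieRing g] [LieAlgebra k g]
    (W : Submodule k g) : W →ₗ[k] W →ₗ[k] g where
  toFun w := LieAlgebra.ad k g (w : g) ∘ₗ W.subtype
  map_add' a b := by ext; simp
  map_smul' a b := by ext; simp

theorem CVaux.lie_case' {k g : Type*} [Field k] [LieRing g] [LieAlgebra k g]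
    [FiniteDimensional k g] (W : Submodule k g) (y : g) (r : ℕ) (hy : y ∈ W)
    (hfin : Module.finrank k ↥(W ⊓ LinearMap.ker (LieAlgebra.ad k g y)) = r) :
    CV.dimSet k g {y | y ∈ W ∧ r < Module.finrank k
      ↥(W ⊓ LinearMap.ker (LieAlgebra.ad k g y))} + 1 ≤
    ((Module.finrank k ↥W : ℕ∞) : WithBot ℕ∞) := by
  obtain ⟨D, hD0, hD⟩ := CVaux.exists_poly (Module.finBasis k W) (CVaux.restrAd W) ⟨y, hy⟩ r
    ((CVaux.fin_eq W ⟨y, hy⟩).trans hfin).le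
  refine CVaux.dimSet_add_one_le W _ (fun z hz => hz.1) (Module.finBasis k W) D hD0 ?_
  intro w hw
  exact hD w (lt_of_lt_of_eq hw.2 (CVaux.fin_eq W w).symm)


/-- Let `m = sl_{n₁} ⊕ … ⊕ sl_{n_q}` over an algebraically closed field
of characteristic zero and let `x ∈ m` be nilpotent.  Then
`codim_{m_x} I(m_x) ≥ 1` where `I(m_x) = {y ∈ m_x | dim (m_x)_y > rk m}`:  equivalently,
there exists `y ∈ m_x` with `dim (m_x)_y = rk m = (n₁ - 1) + … + (n_q - 1)`, so that
`I(m_x)` is a proper (Zariski-closed) subset of `m_x`, of dimension `< dim m_x`. -/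
theorem irregular_locus_of_centralizer_in_sl_proper
    (k : Type*) [Field k] [IsAlgClosed k] [CharZero k]
    (q : ℕ) (n : Fin q → ℕ)
    (x : ∀ i : Fin q, ↥(sl (Fin (n i)) k))
    (hx : ∀ i, IsNilpotent ((x i : Matrix (Fin (n i)) (Fin (n i)) k))) :
    (∃ y ∈ LinearMap.ker (LieAlgebra.ad k (∀ i : Fin q, ↥(sl (Fin (n i)) k)) x),
      Module.finrank k
          ↥(LinearMap.ker (LieAlgebra.ad k (∀ i : Fin q, ↥(sl (Fin (n i)) k)) x)
            ⊓ LinearMap.ker (LieAlgebra.ad k (∀ i : Fin q, ↥(sl (Fin (n i)) k)) y))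
        = ∑ i, (n i - 1)) ∧
    {y | y ∈ LinearMap.ker (LieAlgebra.ad k (∀ i : Fin q, ↥(sl (Fin (n i)) k)) x) ∧
        ∑ i, (n i - 1)
          < Module.finrank k
              ↥(LinearMap.ker (LieAlgebra.ad k (∀ i : Fin q, ↥(sl (Fin (n i)) k)) x)
                ⊓ LinearMap.ker (LieAlgebra.ad k (∀ i : Fin q, ↥(sl (Fin (n i)) k)) y))}
      ⊂ ↑(LinearMap.ker (LieAlgebra.ad k (∀ i : Fin q, ↥(sl (Fin (n i)) k)) x)) ∧
    CV.dimSet k (∀ i : Fin q, ↥(sl (Fin (n i)) k))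
        {y | y ∈ LinearMap.ker (LieAlgebra.ad k (∀ i : Fin q, ↥(sl (Fin (n i)) k)) x) ∧
          ∑ i, (n i - 1)
            < Module.finrank k
                ↥(LinearMap.ker (LieAlgebra.ad k (∀ i : Fin q, ↥(sl (Fin (n i)) k)) x)
                  ⊓ LinearMap.ker (LieAlgebra.ad k (∀ i : Fin q, ↥(sl (Fin (n i)) k)) y))}
        + 1
      ≤ ((Module.finrank k
          ↥(LinearMap.ker (LieAlgebra.ad k (∀ i : Fin q, ↥(sl (Fin (n i)) k)) x)) : ℕ∞)
          : WithBot ℕ∞) := by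
  obtain ⟨y, hy, hfin⟩ := CVaux.pi_case q n x
  refine ⟨⟨y, hy, hfin⟩, ⟨fun z hz => hz.1, fun h => ?_⟩, ?_⟩
  · have := (h hy).2
    omega
  · exact CVaux.lie_case' _ y _ hy hfin
end
end

section
/- Let a = so₅(k), the 10-dimensional orthogonal Lie algebra of rank 2. There exists a nilpotent element x ∈ a with dim a_x = 4 (a subregular nilpotent element, namely a short root vector) such that the set I(a_x) := {y ∈ a_x : dim (a_x)_y > 2} is a 3-dimensional linear subspace of a_x; in particular codim_{a_x} I(a_x) = 1. -/
noncomputable section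

open Module

theorem exists_congr_of_symm (k : Type*) [Field k] [IsAlgClosed k] [CharZero k]
    (J J' : Matrix (Fin 5) (Fin 5) k) (hs : J.IsSymm) (hu : IsUnit J)
    (hs' : J'.IsSymm) (hu' : IsUnit J') :
    ∃ P : Matrix (Fin 5) (Fin 5) k, IsUnit P ∧ P.transpose * J' * P = J := by
  have : Invertible (2 : k) := invertibleOfNonzero two_ne_zero
  have assoc : ∀ A : Matrix (Fin 5) (Fin 5) k, A.IsSymm →
      QuadraticMap.associated (R := k)
        (LinearMap.BilinMap.toQuadraticMap (Matrix.toBilin' A)) = Matrix.toBilin' A := by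
    intro A hA
    apply QuadraticMap.associated_left_inverse
    intro x y
    simp only [Matrix.toBilin'_apply']
    rw [dotProduct_comm, Matrix.dotProduct_mulVec, ← Matrix.mulVec_transpose, hA.eq]
  have sep : ∀ A : Matrix (Fin 5) (Fin 5) k, A.IsSymm → IsUnit A →
      (QuadraticMap.associated (R := k)
        (LinearMap.BilinMap.toQuadraticMap (Matrix.toBilin' A))).SeparatingLeft := by
    intro A hA hA'
    rw [assoc A hA]
    have := (LinearMap.BilinForm.nondegenerate_toBilin'_iff_det_ne_zero (M := A)).2
      ((Matrix.isUnit_iff_isUnit_det A).1 hA').ne_zero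
    exact this.1
  obtain ⟨f⟩ := QuadraticForm.equivalent_of_isAlgClosed _ _ (sep J hs hu) (sep J' hs' hu')
  refine ⟨LinearMap.toMatrix' f.toLinearEquiv.toLinearMap, ?_, ?_⟩
  · rw [LinearMap.isUnit_toMatrix'_iff]
    exact (Module.End.isUnit_iff _).2 f.toLinearEquiv.bijective
  · have h : (LinearMap.BilinMap.toQuadraticMap (Matrix.toBilin' J')).comp
        f.toLinearEquiv.toLinearMap = LinearMap.BilinMap.toQuadraticMap (Matrix.toBilin' J) := by
      ext v
      exact f.map_app v
    have h2 := congrArg (QuadraticMap.associated (R := k)) h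
    rw [QuadraticMap.associated_comp, assoc J hs, assoc J' hs'] at h2
    have h3 := congrArg LinearMap.BilinForm.toMatrix' h2
    rw [LinearMap.BilinForm.toMatrix'_toBilin'] at h3
    refine Eq.trans ?_ h3
    change _ = LinearMap.BilinForm.toMatrix' ((Matrix.toBilin' J').comp _ _)
    rw [LinearMap.BilinForm.toMatrix'_comp, LinearMap.BilinForm.toMatrix'_toBilin']

theorem abstract_part {k L : Type*} [Field k] [LieRing L] [LieAlgebra k L]
    (h u v x : L) (li : LinearIndependent k ![h, u, v, x])
    (hu : ⁅h, u⁆ = -u) (hv : ⁅h, v⁆ = v) (huv : ⁅u, v⁆ = 0)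
    (hx : ⁅x, h⁆ = 0) (ux : ⁅x, u⁆ = 0) (vx : ⁅x, v⁆ = 0)
    (hsp : ∀ y : L, ⁅x, y⁆ = 0 → ∃ a b c d : k, y = a • h + b • u + c • v + d • x) :
    Module.finrank k (LinearMap.ker (LieAlgebra.ad k L x)) = 4 ∧
      ∃ W : Submodule k L, W ≤ LinearMap.ker (LieAlgebra.ad k L x) ∧
        Module.finrank k W = 3 ∧
        {y : L | y ∈ LinearMap.ker (LieAlgebra.ad k L x) ∧
            2 < Module.finrank k
                ↥(LinearMap.ker (LieAlgebra.ad k L x) ⊓ LinearMap.ker (LieAlgebra.ad k L y))}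
          = (↑W : Set L) := by
  have hk : LinearMap.ker (LieAlgebra.ad k L x) = Submodule.span k (Set.range ![h, u, v, x]) := by
    ext y
    simp only [LinearMap.mem_ker, LieAlgebra.ad_apply, Submodule.mem_span_range_iff_exists_fun,
      Fin.sum_univ_four]
    constructor
    · intro hy
      obtain ⟨a, b, c, d, rfl⟩ := hsp y hy
      exact ⟨![a, b, c, d], rfl⟩
    · rintro ⟨c, rfl⟩
      simp [hx, ux, vx]
  have hW : Submodule.span k (Set.range ![u, v, x]) ≤ LinearMap.ker (LieAlgebra.ad k L x) := by
    rw [Submodule.span_le]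
    rintro _ ⟨i, rfl⟩
    fin_cases i <;> simp [ux, vx]
  have li3 : LinearIndependent k ![u, v, x] := by
    have := li.comp Fin.succ (Fin.succ_injective 3)
    convert this using 1
    ext i
    fin_cases i <;> rfl
  have f3 : Module.finrank k (Submodule.span k (Set.range ![u, v, x])) = 3 := by
    simpa using finrank_span_eq_card li3
  have f4 : Module.finrank k (LinearMap.ker (LieAlgebra.ad k L x)) = 4 := by
    rw [hk]; simpa using finrank_span_eq_card li
  have fd : FiniteDimensional k (LinearMap.ker (LieAlgebra.ad k L x)) :=
    FiniteDimensional.of_finrank_pos (by omega)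
  have hvu : ⁅v, u⁆ = 0 := by rw [← lie_skew, huv, neg_zero]
  have uh : ⁅u, h⁆ = u := by rw [← lie_skew, hu, neg_neg]
  have vh : ⁅v, h⁆ = -v := by rw [← lie_skew, hv]
  have xh : ⁅h, x⁆ = 0 := by rw [← lie_skew, hx, neg_zero]
  have xu : ⁅u, x⁆ = 0 := by rw [← lie_skew, ux, neg_zero]
  have xv : ⁅v, x⁆ = 0 := by rw [← lie_skew, vx, neg_zero]
  refine ⟨f4, _, hW, f3, ?_⟩
  ext y
  simp only [Set.mem_ofPred_eq, SetLike.mem_coe]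
  constructor
  · rintro ⟨hy, hlt⟩
    obtain ⟨a, b, c, d, rfl⟩ := hsp y hy
    by_cases ha : a = 0
    · subst ha
      rw [Submodule.mem_span_range_iff_exists_fun]
      exact ⟨![b, c, d], by simp [Fin.sum_univ_three]⟩
    · exfalso
      have hle : LinearMap.ker (LieAlgebra.ad k L x) ⊓
          LinearMap.ker (LieAlgebra.ad k L (a • h + b • u + c • v + d • x)) ≤
          Submodule.span k (Set.range ![a • h + b • u + c • v + d • x, x]) := by
        rintro z ⟨hz, hz'⟩
        obtain ⟨a', b', c', d', rfl⟩ := hsp z hz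
        have e : (0 : k) • h + (a' * b - a * b') • u + (a * c' - a' * c) • v + (0 : k) • x = 0 := by
          rw [← show _ = (0 : L) from hz']
          simp only [LieAlgebra.ad_apply, lie_add, add_lie, smul_lie, lie_smul, hu, hv, huv, hx, ux,
            vx, hvu, uh, vh, xh, xu, xv, lie_self, smul_zero]
          module
        have e2 := Fintype.linearIndependent_iff.1 li
          ![0, a' * b - a * b', a * c' - a' * c, 0] (by simpa [Fin.sum_univ_four] using e)
        have e3 : a' * b - a * b' = 0 := e2 1
        have e4 : a * c' - a' * c = 0 := e2 2
        rw [Submodule.mem_span_range_iff_exists_fun]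
        refine ⟨![a' / a, d' - a' / a * d], ?_⟩
        have e5 : b' = a' / a * b := by field_simp; linear_combination -e3
        have e6 : c' = a' / a * c := by field_simp; linear_combination e4
        have e7 : a' = a' / a * a := by field_simp
        simp only [Fin.sum_univ_two, Matrix.cons_val_zero, Matrix.cons_val_one]
        rw [e5, e6]
        nth_rw 3 [e7]
        module
      have fd2 : FiniteDimensional k (Submodule.span k
          (Set.range ![a • h + b • u + c • v + d • x, x])) :=
        FiniteDimensional.span_of_finite k (Set.finite_range _)
      have h2 := Submodule.finrank_mono hle
      have h3 := finrank_range_le_card (R := k) ![a • h + b • u + c • v + d • x, x]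
      simp only [Set.finrank, Fintype.card_fin] at h3
      omega
  · intro hy
    refine ⟨hW hy, ?_⟩
    have hle : Submodule.span k (Set.range ![u, v, x]) ≤ LinearMap.ker (LieAlgebra.ad k L x) ⊓
          LinearMap.ker (LieAlgebra.ad k L y) := by
      refine le_inf hW ?_
      rw [Submodule.mem_span_range_iff_exists_fun] at hy
      obtain ⟨c, rfl⟩ := hy
      rw [Submodule.span_le]
      rintro _ ⟨i, rfl⟩
      fin_cases i <;> simp [Fin.sum_univ_three, ux, vx, xu, xv, huv, hvu]
    have := Submodule.finrank_mono hle
    omega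

def stdJ (k : Type*) [Field k] : Matrix (Fin 5) (Fin 5) k :=
  !![0,0,0,0,1; 0,0,0,1,0; 0,0,1,0,0; 0,1,0,0,0; 1,0,0,0,0]
def stdH (k : Type*) [Field k] : Matrix (Fin 5) (Fin 5) k :=
  !![0,0,0,0,0; 0,1,0,0,0; 0,0,0,0,0; 0,0,0,-1,0; 0,0,0,0,0]
def stdU (k : Type*) [Field k] : Matrix (Fin 5) (Fin 5) k :=
  !![0,1,0,0,0; 0,0,0,0,0; 0,0,0,0,0; 0,0,0,0,-1; 0,0,0,0,0]
def stdV (k : Type*) [Field k] : Matrix (Fin 5) (Fin 5) k :=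
  !![0,0,0,1,0; 0,0,0,0,-1; 0,0,0,0,0; 0,0,0,0,0; 0,0,0,0,0]
def stdX (k : Type*) [Field k] : Matrix (Fin 5) (Fin 5) k :=
  !![0,0,1,0,0; 0,0,0,0,0; 0,0,0,0,-1; 0,0,0,0,0; 0,0,0,0,0]

theorem stdJ_sq (k : Type*) [Field k] : stdJ k * stdJ k = 1 := by
  ext i j
  fin_cases i <;> fin_cases j <;> simp [stdJ, Matrix.mul_apply, Fin.sum_univ_five]

theorem mem_std {k : Type*} [Field k] (A : Matrix (Fin 5) (Fin 5) k) :
    A ∈ skewAdjointMatricesLieSubalgebra (stdJ k) ↔ A.transpose * stdJ k = stdJ k * (-A) := by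
  simp [Matrix.IsSkewAdjoint, Matrix.IsAdjointPair]

set_option maxHeartbeats 4000000 in
theorem std_part (k : Type*) [Field k] [CharZero k] :
    ∃ h u v x : skewAdjointMatricesLieSubalgebra (stdJ k),
      IsNilpotent (x : Matrix (Fin 5) (Fin 5) k) ∧ LinearIndependent k ![h, u, v, x] ∧
      ⁅h, u⁆ = -u ∧ ⁅h, v⁆ = v ∧ ⁅u, v⁆ = 0 ∧ ⁅x, h⁆ = 0 ∧ ⁅x, u⁆ = 0 ∧ ⁅x, v⁆ = 0 ∧
      ∀ y, ⁅x, y⁆ = 0 → ∃ a b c d : k, y = a • h + b • u + c • v + d • x := by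
  have hH : stdH k ∈ skewAdjointMatricesLieSubalgebra (stdJ k) := by
    rw [mem_std]; ext i j
    fin_cases i <;> fin_cases j <;> simp [stdJ, stdH, Matrix.mul_apply, Fin.sum_univ_five]
  have hU : stdU k ∈ skewAdjointMatricesLieSubalgebra (stdJ k) := by
    rw [mem_std]; ext i j
    fin_cases i <;> fin_cases j <;> simp [stdJ, stdU, Matrix.mul_apply, Fin.sum_univ_five]
  have hV : stdV k ∈ skewAdjointMatricesLieSubalgebra (stdJ k) := by
    rw [mem_std]; ext i j
    fin_cases i <;> fin_cases j <;> simp [stdJ, stdV, Matrix.mul_apply, Fin.sum_univ_five]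
  have hX : stdX k ∈ skewAdjointMatricesLieSubalgebra (stdJ k) := by
    rw [mem_std]; ext i j
    fin_cases i <;> fin_cases j <;> simp [stdJ, stdX, Matrix.mul_apply, Fin.sum_univ_five]
  refine ⟨⟨_, hH⟩, ⟨_, hU⟩, ⟨_, hV⟩, ⟨_, hX⟩, ⟨3, ?_⟩, ?_, ?_, ?_, ?_, ?_, ?_, ?_, ?_⟩
  · ext i j
    fin_cases i <;> fin_cases j <;> simp [stdX, pow_succ, Matrix.mul_apply, Fin.sum_univ_five]
  · rw [Fintype.linearIndependent_iff]
    intro g hg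
    have hg' := congrArg Subtype.val hg
    simp only [Fin.sum_univ_four] at hg'
    have e : g 0 • stdH k + g 1 • stdU k + g 2 • stdV k + g 3 • stdX k = 0 := hg'
    have e0 := congrFun (congrFun e 1) 1
    have e1 := congrFun (congrFun e 0) 1
    have e2 := congrFun (congrFun e 0) 3
    have e3 := congrFun (congrFun e 0) 2
    simp [stdH, stdU, stdV, stdX] at e0 e1 e2 e3
    intro i
    fin_cases i <;> assumption
  · apply Subtype.ext
    change stdH k * stdU k - stdU k * stdH k = - stdU k
    ext i j
    fin_cases i <;> fin_cases j <;> simp [stdH, stdU, Matrix.mul_apply, Fin.sum_univ_five]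
  · apply Subtype.ext
    change stdH k * stdV k - stdV k * stdH k = stdV k
    ext i j
    fin_cases i <;> fin_cases j <;> simp [stdH, stdV, Matrix.mul_apply, Fin.sum_univ_five]
  · apply Subtype.ext
    change stdU k * stdV k - stdV k * stdU k = 0
    ext i j
    fin_cases i <;> fin_cases j <;> simp [stdU, stdV, Matrix.mul_apply, Fin.sum_univ_five]
  · apply Subtype.ext
    change stdX k * stdH k - stdH k * stdX k = 0
    ext i j
    fin_cases i <;> fin_cases j <;> simp [stdX, stdH, Matrix.mul_apply, Fin.sum_univ_five]
  · apply Subtype.ext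
    change stdX k * stdU k - stdU k * stdX k = 0
    ext i j
    fin_cases i <;> fin_cases j <;> simp [stdX, stdU, Matrix.mul_apply, Fin.sum_univ_five]
  · apply Subtype.ext
    change stdX k * stdV k - stdV k * stdX k = 0
    ext i j
    fin_cases i <;> fin_cases j <;> simp [stdX, stdV, Matrix.mul_apply, Fin.sum_univ_five]
  · rintro ⟨y, hy⟩ hxy
    have hxy' : stdX k * y - y * stdX k = 0 := congrArg Subtype.val hxy
    rw [mem_std] at hy
    refine ⟨y 1 1, y 0 1, y 0 3, y 0 2, ?_⟩
    apply Subtype.ext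
    change y = y 1 1 • stdH k + y 0 1 • stdU k + y 0 3 • stdV k + y 0 2 • stdX k
    have s : ∀ i j, (y.transpose * stdJ k) i j = (stdJ k * (-y)) i j := fun i j => by rw [hy]
    have c : ∀ i j, (stdX k * y - y * stdX k) i j = 0 := fun i j => by rw [hxy']; rfl
    simp only [Fin.forall_fin_succ, Matrix.sub_apply, Matrix.mul_apply, Fin.sum_univ_five] at s c
    simp [stdJ, stdX] at s c
    clear hxy hxy' hy hH hU hV hX
    ext i j
    fin_cases i <;> fin_cases j <;> simp [stdH, stdU, stdV, stdX] <;> grind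

/-- Let `a = so₅ (k)` be the orthogonal Lie algebra in dimension `5`
(the `5 × 5` matrices skew-adjoint with respect to a nondegenerate symmetric bilinear form
with Gram matrix `J`), a simple Lie algebra of type `B₂`, of dimension `10` and rank `2`.
There is a nilpotent element `x ∈ a` with `dim a_x = 4` (a subregular nilpotent element)
such that `I(a_x) = {y ∈ a_x | dim (a_x)_y > 2}` is a 3-dimensional linear subspace of
`a_x`; in particular `codim_{a_x} I(a_x) = 1`. -/
theorem so5_subregular_irregular_locus_codim_one
    (k : Type*) [Field k] [IsAlgClosed k] [CharZero k]
    (J : Matrix (Fin 5) (Fin 5) k) (hJsymm : J.IsSymm) (hJunit : IsUnit J) :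
    ∃ x : ↥(skewAdjointMatricesLieSubalgebra J),
      IsNilpotent (x : Matrix (Fin 5) (Fin 5) k) ∧
      Module.finrank k
          ↥(LinearMap.ker (LieAlgebra.ad k ↥(skewAdjointMatricesLieSubalgebra J) x)) = 4 ∧
      ∃ W : Submodule k ↥(skewAdjointMatricesLieSubalgebra J),
        W ≤ LinearMap.ker (LieAlgebra.ad k ↥(skewAdjointMatricesLieSubalgebra J) x) ∧
        Module.finrank k ↥W = 3 ∧
        {y : ↥(skewAdjointMatricesLieSubalgebra J) |
            y ∈ LinearMap.ker (LieAlgebra.ad k ↥(skewAdjointMatricesLieSubalgebra J) x) ∧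
            2 < Module.finrank k
                ↥(LinearMap.ker (LieAlgebra.ad k ↥(skewAdjointMatricesLieSubalgebra J) x)
                  ⊓ LinearMap.ker (LieAlgebra.ad k ↥(skewAdjointMatricesLieSubalgebra J) y))}
          = (↑W : Set ↥(skewAdjointMatricesLieSubalgebra J)) := by
  have hs : (stdJ k).IsSymm := by
    ext i j
    fin_cases i <;> fin_cases j <;> simp [stdJ]
  have hu : IsUnit (stdJ k) := IsUnit.of_mul_eq_one _ (stdJ_sq k)
  obtain ⟨P, hP, rfl⟩ := exists_congr_of_symm k J (stdJ k) hJsymm hJunit hs hu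
  let iP : Invertible P := hP.invertible
  obtain ⟨h, u, v, x, hn, li, h1, h2, h3, h4, h5, h6, h7⟩ := std_part k
  let e := skewAdjointMatricesLieSubalgebraEquiv (stdJ k) P iP
  refine ⟨e x, ?_, abstract_part (e h) (e u) (e v) (e x) ?_ ?_ ?_ ?_ ?_ ?_ ?_ ?_⟩
  · rw [skewAdjointMatricesLieSubalgebraEquiv_apply]
    obtain ⟨n, hn⟩ := hn
    refine ⟨n, ?_⟩
    have key : ∀ m : ℕ, (P⁻¹ * (x : Matrix (Fin 5) (Fin 5) k) * P) ^ m
        = P⁻¹ * (x : Matrix (Fin 5) (Fin 5) k) ^ m * P := by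
      intro m
      induction m with
      | zero => simp
      | succ m ih =>
        rw [pow_succ, ih, pow_succ]
        simp [mul_assoc]
    rw [key, hn]; simp
  · have := li.map' e.toLinearEquiv.toLinearMap e.toLinearEquiv.ker
    have hfun : ![e h, e u, e v, e x] = e.toLinearEquiv.toLinearMap ∘ ![h, u, v, x] := by
      funext i
      fin_cases i <;> rfl
    rw [hfun]
    exact this
  · rw [← LieEquiv.map_lie, h1, map_neg]
  · rw [← LieEquiv.map_lie, h2]
  · rw [← LieEquiv.map_lie, h3, map_zero]
  · rw [← LieEquiv.map_lie, h4, map_zero]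
  · rw [← LieEquiv.map_lie, h5, map_zero]
  · rw [← LieEquiv.map_lie, h6, map_zero]
  · intro y hy
    obtain ⟨a, b, c, d, hh⟩ := h7 (e.symm y) (by
      apply e.injective
      change e _ = e 0
      rw [LieEquiv.map_lie, LieEquiv.apply_symm_apply, hy, map_zero])
    refine ⟨a, b, c, d, ?_⟩
    rw [← e.apply_symm_apply y, hh]
    simp
end
end
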